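/- arXiv:2211.03606 — 3 statements merged into one kernel-verified Lean document; each statement's English description precedes it below -/
import Mathlib

section
/- Let φ ∈ H³(ℝ³; ℝ) be radial (invariant under all rotations of ℝ³) with ∇φ ≠ 0. Set λ := ‖∇φ‖²_{L²}/6 and M^{LP} := (2/3)‖∇φ‖²_{L²}. Let Π₀ be the orthogonal projection in L²(ℝ³; ℂ) onto the complex span of the three partial derivatives ∂₁φ, ∂₂φ, ∂₃φ, and Π₁ := 1 − Π₀. For α > 0 and P ∈ ℝ³ define ξ_P := i (α² M^{LP})^{−1} (P·∇)φ, φ_P := φ + ξ_P, and w_{P,y} := φ_P − τ_y φ_P, where (τ_y f)(z) = f(z−y). Then for every c > 0 there is a constant C > 0 such that for all y ∈ ℝ³, all α > 0, and all P with |P| ≤ c α: (i) ‖Π₁ w_{P,y}‖²_{L²} ≤ C (α^{−2}|y|² + |y|⁴), and (ii) | ‖Π₀ w_{P,y}‖²_{L²} − 2λ|y|² | ≤ C (α^{−2}|y|² + |y|⁴ + |y|⁶). -/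
open MeasureTheory Real Complex
open scoped ComplexConjugate

noncomputable section

/-!
Write `D v = (v·∇)φ` and `K` for the norm of the second derivative of `φ`. The identity
`F - τ_y F = ∫₀¹ τ_{ty} G dt`, valid when `G` is the weak derivative of `F` in direction `y`, gives
`‖D v - τ_y (D v)‖ ≤ K ‖v‖ ‖y‖` and `‖φ - τ_y φ - D y‖ ≤ K ‖y‖²`. Together with the Pythagorean
theorem this bounds everything except the deviation of `‖Π₀ (φ - τ_y φ)‖²` from `‖D y‖²`.

That deviation is controlled by `⟪D v, φ - τ_y φ - D y⟫ = ∫₀¹ ⟪D v, τ_{ty} (D y) - D y⟫ dt`. Since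
`φ` is even, `z ↦ ⟪D v, τ_z (D w)⟫` is even, and this turns the second difference into
`⟪ψ, τ_z G - G⟫ = -½ ⟪ψ - τ_z ψ, G - τ_z G⟫`. The pairing is therefore of order `‖y‖³` without any
use of third derivatives. Finally, radial symmetry makes `D` conformal, `⟪D v, D w⟫ = 2λ ⟪v, w⟫`,
so that `‖D y‖² = 2λ‖y‖²`.
-/

section LinearAlgebra

variable {E H : Type*} [NormedAddCommGroup E] [InnerProductSpace ℝ E]
  [NormedAddCommGroup H] [InnerProductSpace ℝ H]

lemma norm_sub_map_sq_add_norm_map_sub_sq {V : Type*} [AddCommGroup V] [Module ℝ V]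
    {D : V →ₗ[ℝ] H} {u : H} {a : V}
    (ha : ∀ v, inner ℝ (D v) (u - D a) = 0) (b : V) :
    ‖u - D a‖ ^ 2 + ‖D (a - b)‖ ^ 2 = ‖u - D b‖ ^ 2 := by
  have hab : u - D b = (u - D a) + D (a - b) := by rw [map_sub]; abel
  rw [hab, norm_add_sq_real, real_inner_comm, ha]
  ring

lemma abs_norm_map_sq_sub_le {D : E →ₗ[ℝ] H} {m : ℝ} (hm : 0 < m)
    (hD : ∀ v w, inner ℝ (D v) (D w) = m * inner ℝ v w) {u : H} {a y : E} {δ : ℝ} (hδ₀ : 0 ≤ δ)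
    (ha : ∀ v, inner ℝ (D v) (u - D a) = 0)
    (hδ : ∀ v, |inner ℝ (D v) (u - D y)| ≤ δ * ‖v‖) :
    |‖D a‖ ^ 2 - m * ‖y‖ ^ 2| ≤ 2 * δ * ‖y‖ + δ ^ 2 / m := by
  have hinner (v : E) : inner ℝ (D v) (u - D y) = m * inner ℝ v (a - y) := by
    rw [← hD, map_sub, ← sub_add_sub_cancel u (D a) (D y), inner_add_right, ha, zero_add]
  have hdist : m * ‖a - y‖ ≤ δ := by
    rcases (norm_nonneg (a - y)).eq_or_lt with h | h
    · rwa [← h, mul_zero]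
    · have := hδ (a - y)
      rw [hinner, real_inner_self_eq_norm_mul_norm, ← mul_assoc] at this
      exact le_of_mul_le_mul_right ((le_abs_self _).trans this) h
  have hexpand : ‖D a‖ ^ 2 - m * ‖y‖ ^ 2 =
      2 * inner ℝ (D y) (u - D y) + m * ‖a - y‖ ^ 2 := by
    rw [hinner, ← real_inner_self_eq_norm_sq, hD, real_inner_self_eq_norm_sq]
    conv_lhs => rw [← add_sub_cancel y a, norm_add_sq_real]
    ring
  have hsq : m * ‖a - y‖ ^ 2 ≤ δ ^ 2 / m := by
    rw [le_div_iff₀ hm]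
    calc m * ‖a - y‖ ^ 2 * m = (m * ‖a - y‖) ^ 2 := by ring
      _ ≤ δ ^ 2 := by gcongr
  calc |‖D a‖ ^ 2 - m * ‖y‖ ^ 2|
      ≤ |2 * inner ℝ (D y) (u - D y)| + |m * ‖a - y‖ ^ 2| := hexpand ▸ abs_add_le _ _
    _ = 2 * |inner ℝ (D y) (u - D y)| + m * ‖a - y‖ ^ 2 := by
        rw [abs_mul, abs_two, abs_of_nonneg (by positivity : 0 ≤ m * ‖a - y‖ ^ 2)]
    _ ≤ 2 * (δ * ‖y‖) + δ ^ 2 / m := by gcongr; exact hδ y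
    _ = 2 * δ * ‖y‖ + δ ^ 2 / m := by ring

lemma inner_map_map_eq_of_norm_map_eq {ι : Type*} [Fintype ι] [Nonempty ι]
    (b : OrthonormalBasis ι ℝ E) {D : E →ₗ[ℝ] H} (hD : ∀ v w, ‖v‖ = ‖w‖ → ‖D v‖ = ‖D w‖)
    (v w : E) :
    inner ℝ (D v) (D w) = (∑ i, ‖D (b i)‖ ^ 2) / Fintype.card ι * inner ℝ v w := by
  have hnorm (v : E) (i : ι) : ‖D v‖ = ‖v‖ * ‖D (b i)‖ := by
    rw [hD v (‖v‖ • b i) (by simp [norm_smul]), map_smul, norm_smul, norm_norm]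
  have hsq (v : E) : ‖D v‖ * ‖D v‖ = (∑ i, ‖D (b i)‖ ^ 2) / Fintype.card ι * (‖v‖ * ‖v‖) := by
    have hcard : ∑ i, ‖D (b i)‖ ^ 2 * ‖v‖ ^ 2 = Fintype.card ι * ‖D v‖ ^ 2 := by
      simp [← mul_pow, mul_comm _ ‖v‖, ← hnorm]
    rw [← Finset.sum_mul] at hcard
    field_simp
    linarith
  rw [real_inner_eq_norm_mul_self_add_norm_mul_self_sub_norm_sub_mul_self_div_two, ← map_sub, hsq,
    hsq, hsq, real_inner_eq_norm_mul_self_add_norm_mul_self_sub_norm_sub_mul_self_div_two]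
  ring

end LinearAlgebra

section L2
variable {X : Type*} [MeasurableSpace X] {μ : Measure X}

lemma inner_eq_integral_mul (F G : Lp ℝ 2 μ) : inner ℝ F G = ∫ x, F x * G x ∂μ := by
  simp [L2.inner_def, mul_comm]

lemma inner_toLp_left {f : X → ℝ} (hf : MemLp f 2 μ) (G : Lp ℝ 2 μ) :
    inner ℝ (hf.toLp f) G = ∫ x, G x * f x ∂μ := by
  rw [real_inner_comm, inner_eq_integral_mul]
  exact integral_congr_ae (hf.coeFn_toLp.mono fun x hx ↦ by simp only [hx])

variable {f : X → ℂ} {U V : Lp ℝ 2 μ}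

lemma integral_norm_sq_of_ae_eq_add_mul_I
    (hf : ∀ᵐ x ∂μ, f x = (U x : ℂ) + (V x : ℂ) * I) :
    ∫ x, ‖f x‖ ^ 2 ∂μ = ‖U‖ ^ 2 + ‖V‖ ^ 2 := by
  calc ∫ x, ‖f x‖ ^ 2 ∂μ = ∫ x, U x * U x + V x * V x ∂μ :=
        integral_congr_ae (hf.mono fun x hx ↦ by
          simp only [hx, ← normSq_eq_norm_sq, normSq_add_mul_I]
          ring)
    _ = ‖U‖ ^ 2 + ‖V‖ ^ 2 := by
        rw [← real_inner_self_eq_norm_sq, ← real_inner_self_eq_norm_sq, inner_eq_integral_mul,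
          inner_eq_integral_mul]
        exact integral_add ((Lp.memLp U).integrable_mul (Lp.memLp U))
          ((Lp.memLp V).integrable_mul (Lp.memLp V))

lemma integral_conj_mul_of_ae_eq_add_mul_I {g : X → ℝ} (hg : MemLp g 2 μ)
    (hf : ∀ᵐ x ∂μ, f x = (U x : ℂ) + (V x : ℂ) * I) :
    ∫ x, conj (g x : ℂ) * f x ∂μ = inner ℝ (hg.toLp g) U + inner ℝ (hg.toLp g) V * I := by
  calc ∫ x, conj (g x : ℂ) * f x ∂μ
      = ∫ x, ((U x * g x : ℝ) : ℂ) + ((V x * g x : ℝ) : ℂ) * I ∂μ :=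
        integral_congr_ae (hf.mono fun x hx ↦ by
          simp only [hx, conj_ofReal, ofReal_mul]
          ring)
    _ = inner ℝ (hg.toLp g) U + inner ℝ (hg.toLp g) V * I := by
        rw [inner_toLp_left, inner_toLp_left, ← integral_complex_ofReal,
          ← integral_complex_ofReal, ← integral_mul_const]
        exact integral_add ((Lp.memLp U).integrable_mul hg).ofReal
          (((Lp.memLp V).integrable_mul hg).ofReal.mul_const I)

end L2

section Rotations
variable {E : Type*} [NormedAddCommGroup E] [InnerProductSpace ℝ E] [FiniteDimensional ℝ E]

lemma exists_reflection_apply_eq_self (hE : 1 < Module.finrank ℝ E) (x : E) :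
    ∃ S : E ≃ₗᵢ[ℝ] E, S x = x ∧ LinearMap.det (S.toLinearEquiv : E →ₗ[ℝ] E) = -1 := by
  have hx : (ℝ ∙ x)ᗮ ≠ ⊥ := by
    intro h
    have hadd := Submodule.finrank_add_finrank_orthogonal (ℝ ∙ x)
    have hle := finrank_span_le_card (R := ℝ) ({x} : Set E)
    rw [h, finrank_bot] at hadd
    rw [Set.toFinset_singleton, Finset.card_singleton] at hle
    omega
  obtain ⟨u, hu, hu0⟩ := Submodule.exists_mem_ne_zero_of_ne_bot hx
  refine ⟨(ℝ ∙ u)ᗮ.reflection, Submodule.reflection_mem_subspace_eq_self ?_, ?_⟩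
  · rwa [Submodule.mem_orthogonal_singleton_iff_inner_left,
      ← Submodule.mem_orthogonal_singleton_iff_inner_right]
  · have := Submodule.det_reflection (𝕜 := ℝ) (ℝ ∙ u)ᗮ
    rwa [Submodule.orthogonal_orthogonal, finrank_span_singleton hu0, pow_one] at this

lemma apply_linearIsometryEquiv_of_rotation_invariant {β : Type*} (hE : 1 < Module.finrank ℝ E)
    {f : E → β}
    (hf : ∀ R : E ≃ₗᵢ[ℝ] E, LinearMap.det (R.toLinearEquiv : E →ₗ[ℝ] E) = 1 → ∀ x, f (R x) = f x)
    (R : E ≃ₗᵢ[ℝ] E) (x : E) : f (R x) = f x := by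
  have hdet : |LinearMap.det (R.toLinearEquiv : E →ₗ[ℝ] E)| = 1 := by
    rw [← LinearMap.normDet_eq_abs_det]
    exact R.toLinearIsometry.normDet_eq_one
  rcases eq_or_eq_neg_of_abs_eq hdet with hR | hR
  · exact hf R hR x
  obtain ⟨S, hSx, hS⟩ := exists_reflection_apply_eq_self hE x
  have hSR : LinearMap.det ((S.trans R).toLinearEquiv : E →ₗ[ℝ] E) = 1 := by
    have hcomp : ((S.trans R).toLinearEquiv : E →ₗ[ℝ] E) =
      (R.toLinearEquiv : E →ₗ[ℝ] E) ∘ₗ (S.toLinearEquiv : E →ₗ[ℝ] E) := rfl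
    rw [hcomp, LinearMap.det_comp, hR, hS]
    norm_num
  simpa only [LinearIsometryEquiv.trans_apply, hSx] using hf (S.trans R) hSR x

end Rotations

section WeakDerivative
variable {E : Type*} [NormedAddCommGroup E] [NormedSpace ℝ E] [MeasurableSpace E]
  {μ : Measure E} {f f' g g' : E → ℝ} {v : E}

/-- `g` is the weak (distributional) derivative of `f` in direction `v`. Working with plain
functions instead of classes modulo null sets leaves integrability to the lemmas that need it. -/
def HasWeakDeriv (μ : Measure E) (f : E → ℝ) (v : E) (g : E → ℝ) : Prop :=
  ∀ ϑ : E → ℝ, ContDiff ℝ (⊤ : ℕ∞) ϑ → HasCompactSupport ϑ →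
    ∫ x, f x * fderiv ℝ ϑ x v ∂μ = -∫ x, g x * ϑ x ∂μ

namespace HasWeakDeriv

lemma congr_ae (h : HasWeakDeriv μ f v g) (hf : f =ᵐ[μ] f') (hg : g =ᵐ[μ] g') :
    HasWeakDeriv μ f' v g' := by
  intro ϑ hϑ hc
  calc ∫ x, f' x * fderiv ℝ ϑ x v ∂μ = ∫ x, f x * fderiv ℝ ϑ x v ∂μ :=
        integral_congr_ae (hf.symm.mul .rfl)
    _ = -∫ x, g x * ϑ x ∂μ := h ϑ hϑ hc
    _ = -∫ x, g' x * ϑ x ∂μ := congr_arg _ (integral_congr_ae (hg.mul .rfl))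

lemma ae_eq [BorelSpace E] [FiniteDimensional ℝ E] (h : HasWeakDeriv μ f v g)
    (h' : HasWeakDeriv μ f v g') (hg : LocallyIntegrable g μ) (hg' : LocallyIntegrable g' μ) :
    g =ᵐ[μ] g' := by
  refine ae_eq_of_integral_contDiff_smul_eq hg hg' fun ϑ hϑ hc ↦ ?_
  simp only [smul_eq_mul, mul_comm (ϑ _)]
  exact neg_injective ((h ϑ hϑ hc).symm.trans (h' ϑ hϑ hc))

variable [BorelSpace E] [IsFiniteMeasureOnCompacts μ]

lemma of_basis {ι : Type*} (b : Module.Basis ι ℝ E) (hf : LocallyIntegrable f μ)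
    {D : E →ₗ[ℝ] Lp ℝ 2 μ} (h : ∀ i, HasWeakDeriv μ f (b i) (D (b i))) (v : E) :
    HasWeakDeriv μ f v (D v) := by
  intro ϑ hϑ hc
  have hϑ2 : MemLp ϑ 2 μ := hϑ.continuous.memLp_of_hasCompactSupport hc
  have hint : Integrable (fun x ↦ f x • fderiv ℝ ϑ x) μ :=
    hf.integrable_smul_right_of_hasCompactSupport (hϑ.continuous_fderiv (by simp))
      (hc.fderiv (𝕜 := ℝ))
  have hL (v : E) : ∫ x, f x * fderiv ℝ ϑ x v ∂μ = (∫ x, f x • fderiv ℝ ϑ x ∂μ) v := by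
    rw [ContinuousLinearMap.integral_apply hint]
    rfl
  have heq : ((∫ x, f x • fderiv ℝ ϑ x ∂μ : E →L[ℝ] ℝ) : E →ₗ[ℝ] ℝ) =
      -(innerₛₗ ℝ (hϑ2.toLp ϑ) ∘ₗ D) := by
    refine b.ext fun i ↦ ?_
    rw [ContinuousLinearMap.coe_coe, ← hL, h i ϑ hϑ hc, ← inner_toLp_left hϑ2]
    rfl
  rw [hL, ← inner_toLp_left hϑ2]
  exact congr($heq v)

lemma map_of_basis {V ι : Type*} [AddCommGroup V] [Module ℝ V] (b : Module.Basis ι ℝ V)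
    {D D' : V →ₗ[ℝ] Lp ℝ 2 μ} (h : ∀ i, HasWeakDeriv μ (D (b i)) v (D' (b i))) (a : V) :
    HasWeakDeriv μ (D a) v (D' a) := by
  intro ϑ hϑ hc
  have hϑ2 : MemLp ϑ 2 μ := hϑ.continuous.memLp_of_hasCompactSupport hc
  have hϑv : MemLp (fun x ↦ fderiv ℝ ϑ x v) 2 μ :=
    ((hϑ.continuous_fderiv (by simp)).clm_apply continuous_const).memLp_of_hasCompactSupport
      (hc.fderiv_apply (𝕜 := ℝ) v)
  have heq : innerₛₗ ℝ (hϑv.toLp _) ∘ₗ D = -(innerₛₗ ℝ (hϑ2.toLp ϑ) ∘ₗ D') := by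
    refine b.ext fun i ↦ ?_
    simpa [inner_toLp_left] using h i ϑ hϑ hc
  simpa [inner_toLp_left] using congr($heq a)

end HasWeakDeriv

end WeakDerivative

section Translation
variable {E : Type*} [NormedAddCommGroup E] [MeasurableSpace E] [BorelSpace E]
  {μ : Measure E} [μ.IsAddRightInvariant]

/-- The translation `τ_y`, `(τ_y F)(x) = F (x - y)`, as a linear isometry of `L²`. -/
def translation (y : E) : Lp ℝ 2 μ →ₗᵢ[ℝ] Lp ℝ 2 μ :=
  Lp.compMeasurePreservingₗᵢ ℝ (· - y) (measurePreserving_sub_right μ y)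

lemma coeFn_translation (y : E) (F : Lp ℝ 2 μ) : translation y F =ᵐ[μ] fun x ↦ F (x - y) :=
  Lp.coeFn_compMeasurePreserving F (measurePreserving_sub_right μ y)

lemma coeFn_sub_translation_of_ae_eq {F : Lp ℝ 2 μ} {f : E → ℝ} (hf : F =ᵐ[μ] f) (y : E) :
    ⇑(F - translation y F) =ᵐ[μ] fun x ↦ f x - f (x - y) := by
  filter_upwards [Lp.coeFn_sub F (translation y F), coeFn_translation y F, hf,
    (measurePreserving_sub_right μ y).quasiMeasurePreserving.ae hf] with x h₁ h₂ h₃ h₄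
  rw [h₁, Pi.sub_apply, h₂, h₃, h₄]

lemma translation_zero (F : Lp ℝ 2 μ) : translation 0 F = F :=
  Lp.ext <| (coeFn_translation 0 F).trans <| .of_forall fun x ↦ congr_arg F (sub_zero x)

lemma translation_neg_translation (y : E) (F : Lp ℝ 2 μ) :
    translation (-y) (translation y F) = F := by
  refine Lp.ext ?_
  filter_upwards [coeFn_translation (-y) (translation y F), (measurePreserving_sub_right μ
    (-y)).quasiMeasurePreserving.ae (coeFn_translation y F)] with x h₁ h₂
  rw [h₁, h₂, sub_neg_eq_add, add_sub_cancel_right]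

lemma inner_translation_right (y : E) (F G : Lp ℝ 2 μ) :
    inner ℝ F (translation y G) = inner ℝ (translation (-y) F) G := by
  rw [← (translation (-y)).inner_map_map, translation_neg_translation]

lemma inner_translation_sub_self {ψ G : Lp ℝ 2 μ} {z : E}
    (heven : inner ℝ ψ (translation (-z) G) = inner ℝ ψ (translation z G)) :
    inner ℝ ψ (translation z G - G) =
      -(inner ℝ (ψ - translation z ψ) (G - translation z G) / 2) := by
  have hswap : inner ℝ (translation z ψ) G = inner ℝ ψ (translation z G) := by
    rw [← heven, inner_translation_right, neg_neg]
  rw [inner_sub_left, inner_sub_right, inner_sub_right, inner_sub_right,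
    (translation z).inner_map_map, hswap]
  ring

end Translation

section Taylor
variable {E : Type*} [NormedAddCommGroup E] [NormedSpace ℝ E] [FiniteDimensional ℝ E]
  [MeasurableSpace E] [BorelSpace E] {μ : Measure E} [μ.IsAddHaarMeasure] {y : E}

lemma inner_intervalIntegral_right {H : Type*} [NormedAddCommGroup H] [InnerProductSpace ℝ H]
    [CompleteSpace H] (ψ : H) {f : ℝ → H} (hf : Continuous f) (a b : ℝ) :
    inner ℝ ψ (∫ t in a..b, f t) = ∫ t in a..b, inner ℝ ψ (f t) :=
  ((innerSL ℝ ψ).intervalIntegral_comp_comm (hf.intervalIntegrable a b)).symm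

lemma continuous_translation (F : Lp ℝ 2 μ) : Continuous fun y ↦ translation y F := by
  have hcont : Continuous fun y : E ↦ (⟨(· - y), continuous_sub_right y⟩ : C(E, E)) :=
    ContinuousMap.continuous_of_continuous_uncurry _ (continuous_snd.sub continuous_fst)
  exact continuous_const.compMeasurePreservingLp hcont (measurePreserving_sub_right μ ·)
    (by norm_num)

lemma continuous_translation_smul (F : Lp ℝ 2 μ) (y : E) :
    Continuous fun t : ℝ ↦ translation (t • y) F :=
  (continuous_translation F).comp (by fun_prop)

lemma integral_smul_comp_add {V : Type*} [NormedAddCommGroup V] [NormedSpace ℝ V] (f : E → ℝ)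
    (g : E → V) (y : E) : ∫ x, f x • g (x + y) ∂μ = ∫ x, f (-x) • g (y - x) ∂μ := by
  rw [← integral_neg_eq_self]
  simp only [sub_eq_add_neg, add_comm]

lemma hasFDerivAt_integral_smul_comp_add {f ϑ : E → ℝ} (hf : LocallyIntegrable f μ)
    (hϑ : ContDiff ℝ 1 ϑ) (hc : HasCompactSupport ϑ) (y : E) :
    HasFDerivAt (fun y ↦ ∫ x, f x • ϑ (x + y) ∂μ) (∫ x, f x • fderiv ℝ ϑ (x + y) ∂μ) y := by
  have hf_neg : LocallyIntegrable (fun x ↦ f (-x)) μ := by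
    rw [← Measure.map_neg_eq_self μ, ← Homeomorph.coe_neg, locallyIntegrable_map_homeomorph] at hf
    exact hf
  have hconv := hc.hasFDerivAt_convolution_right (ContinuousLinearMap.mul ℝ ℝ) hf_neg hϑ y
  rw [integral_smul_comp_add f (fderiv ℝ ϑ), funext (integral_smul_comp_add f ϑ)]
  exact hconv

variable {F G : Lp ℝ 2 μ}

lemma HasWeakDeriv.hasDerivAt_inner_translation (h : HasWeakDeriv μ F y G) {ϑ : E → ℝ}
    (hϑ : ContDiff ℝ (⊤ : ℕ∞) ϑ) (hc : HasCompactSupport ϑ) (hϑ2 : MemLp ϑ 2 μ) (t : ℝ) :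
    HasDerivAt (fun t : ℝ ↦ inner ℝ (hϑ2.toLp ϑ) (translation (t • y) F))
      (-inner ℝ (hϑ2.toLp ϑ) (translation (t • y) G)) t := by
  have hinner (K : Lp ℝ 2 μ) (z : E) :
      inner ℝ (hϑ2.toLp ϑ) (translation z K) = ∫ x, K x * ϑ (x + z) ∂μ := by
    rw [inner_toLp_left, ← integral_sub_right_eq_self (fun x ↦ K x * ϑ (x + z)) z]
    refine integral_congr_ae ((coeFn_translation z K).mono fun x hx ↦ ?_)
    simp only [hx, sub_add_cancel]
  have hF : LocallyIntegrable F μ := (Lp.memLp F).locallyIntegrable one_le_two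
  have hderiv := (hasFDerivAt_integral_smul_comp_add hF (hϑ.of_le (by simp)) hc
    (t • y)).comp_hasDerivAt t ((hasDerivAt_id t).smul_const y)
  have hG := h (fun x ↦ ϑ (x + t • y)) (by fun_prop)
    (hc.comp_homeomorph (Homeomorph.addRight (t • y)))
  simp only [hinner]
  refine hderiv.congr_deriv ?_
  rw [← hG, one_smul, ContinuousLinearMap.integral_apply]
  · simp only [fderiv_comp_add_right]
    rfl
  · exact hF.integrable_smul_right_of_hasCompactSupport
      ((hϑ.continuous_fderiv (by simp)).comp (continuous_add_const _))
      ((hc.fderiv (𝕜 := ℝ)).comp_homeomorph (Homeomorph.addRight (t • y)))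

lemma HasWeakDeriv.sub_translation_eq_integral (h : HasWeakDeriv μ F y G) :
    F - translation y F = ∫ t in (0 : ℝ)..1, translation (t • y) G := by
  have hcont := continuous_translation_smul G y
  refine (Lp.dense_hasCompactSupport_contDiff (by norm_num)).eq_of_inner_right ℝ ?_
  rintro Θ ⟨ϑ, hΘ, hc, hϑ⟩
  have hϑ2 : MemLp ϑ 2 μ := (memLp_congr_ae hΘ).mp (Lp.memLp Θ)
  obtain rfl : hϑ2.toLp ϑ = Θ := Lp.ext (hϑ2.coeFn_toLp.trans hΘ.symm)
  have hFTC := intervalIntegral.integral_eq_sub_of_hasDerivAt (a := 0) (b := 1)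
    (fun t _ ↦ h.hasDerivAt_inner_translation hϑ hc hϑ2 t)
    (Continuous.intervalIntegrable (by fun_prop) _ _)
  rw [intervalIntegral.integral_neg, one_smul, zero_smul, translation_zero] at hFTC
  rw [inner_intervalIntegral_right _ hcont, inner_sub_right]
  linarith

lemma HasWeakDeriv.norm_sub_translation_le (h : HasWeakDeriv μ F y G) :
    ‖F - translation y F‖ ≤ ‖G‖ := by
  rw [h.sub_translation_eq_integral]
  simpa using intervalIntegral.norm_integral_le_of_norm_le_const (a := 0) (b := 1)
    fun t _ ↦ ((translation (t • y)).norm_map G).le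

lemma HasWeakDeriv.sub_translation_sub_eq_integral (h : HasWeakDeriv μ F y G) :
    F - translation y F - G = ∫ t in (0 : ℝ)..1, (translation (t • y) G - G) := by
  rw [intervalIntegral.integral_sub ((continuous_translation_smul G y).intervalIntegrable 0 1)
    (by simp), ← h.sub_translation_eq_integral]
  simp

lemma HasWeakDeriv.norm_sub_translation_sub_le (h : HasWeakDeriv μ F y G) {B : ℝ}
    (hB : ∀ t ∈ Set.Icc (0 : ℝ) 1, ‖G - translation (t • y) G‖ ≤ B) :
    ‖F - translation y F - G‖ ≤ B := by
  rw [h.sub_translation_sub_eq_integral]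
  simpa using intervalIntegral.norm_integral_le_of_norm_le_const (a := 0) (b := 1)
    fun t ht ↦ (norm_sub_rev _ _).trans_le (hB t (Set.uIoc_subset_uIcc.trans (by simp) ht))

lemma HasWeakDeriv.abs_inner_sub_translation_sub_le (h : HasWeakDeriv μ F y G) (ψ : Lp ℝ 2 μ)
    {B : ℝ} (hB : ∀ t ∈ Set.Icc (0 : ℝ) 1, |inner ℝ ψ (translation (t • y) G - G)| ≤ B) :
    |inner ℝ ψ (F - translation y F - G)| ≤ B := by
  have hcont : Continuous fun t : ℝ ↦ translation (t • y) G - G :=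
    (continuous_translation_smul G y).sub continuous_const
  rw [h.sub_translation_sub_eq_integral, inner_intervalIntegral_right _ hcont]
  simpa using intervalIntegral.norm_integral_le_of_norm_le_const (a := 0) (b := 1)
    (f := fun t : ℝ ↦ inner ℝ ψ (translation (t • y) G - G)) (C := B)
    fun t ht ↦ hB t (Set.uIoc_subset_uIcc.trans (by simp) ht)

section Hessian
variable {D : E →ₗ[ℝ] Lp ℝ 2 μ} {D₂ : E →L[ℝ] E →L[ℝ] Lp ℝ 2 μ}
  (hD₂ : ∀ v w, HasWeakDeriv μ (D v) w (D₂ v w))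
include hD₂

lemma norm_weakDeriv_sub_translation_le (v z : E) :
    ‖D v - translation z (D v)‖ ≤ ‖D₂‖ * ‖v‖ * ‖z‖ :=
  (hD₂ v z).norm_sub_translation_le.trans (D₂.le_opNorm₂ v z)

lemma norm_weakDeriv_sub_translation_smul_le (v y : E) {t : ℝ} (ht : t ∈ Set.Icc (0 : ℝ) 1) :
    ‖D v - translation (t • y) (D v)‖ ≤ ‖D₂‖ * ‖v‖ * ‖y‖ := by
  refine (norm_weakDeriv_sub_translation_le hD₂ v (t • y)).trans ?_
  rw [norm_smul, norm_of_nonneg ht.1]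
  gcongr
  exact mul_le_of_le_one_left (norm_nonneg y) ht.2

lemma norm_sub_translation_sub_weakDeriv_le (hD : ∀ v, HasWeakDeriv μ F v (D v)) (y : E) :
    ‖F - translation y F - D y‖ ≤ ‖D₂‖ * ‖y‖ ^ 2 := by
  rw [sq, ← mul_assoc]
  exact (hD y).norm_sub_translation_sub_le fun t ht ↦
    norm_weakDeriv_sub_translation_smul_le hD₂ y y ht

lemma abs_inner_weakDeriv_sub_translation_sub_le (hD : ∀ v, HasWeakDeriv μ F v (D v))
    (heven : ∀ v w z, inner ℝ (D v) (translation (-z) (D w)) =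
      inner ℝ (D v) (translation z (D w))) (v y : E) :
    |inner ℝ (D v) (F - translation y F - D y)| ≤ ‖D₂‖ ^ 2 * ‖y‖ ^ 3 / 2 * ‖v‖ := by
  refine (hD y).abs_inner_sub_translation_sub_le (D v) fun t ht ↦ ?_
  rw [inner_translation_sub_self (heven v y _), abs_neg, abs_div, abs_two]
  calc |inner ℝ (D v - translation (t • y) (D v)) (D y - translation (t • y) (D y))| / 2
      ≤ ‖D v - translation (t • y) (D v)‖ * ‖D y - translation (t • y) (D y)‖ / 2 := by
        gcongr
        exact abs_real_inner_le_norm _ _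
    _ ≤ (‖D₂‖ * ‖v‖ * ‖y‖) * (‖D₂‖ * ‖y‖ * ‖y‖) / 2 := by
        gcongr <;> exact norm_weakDeriv_sub_translation_smul_le hD₂ _ y ht
    _ = ‖D₂‖ ^ 2 * ‖y‖ ^ 3 / 2 * ‖v‖ := by ring

variable {a b Q : E}

lemma norm_sub_proj_sq_add_norm_proj_sq_le
    (hb : ∀ v, inner ℝ (D v) (D Q - translation y (D Q) - D b) = 0) :
    ‖D Q - translation y (D Q) - D b‖ ^ 2 + ‖D b‖ ^ 2 ≤ ‖D₂‖ ^ 2 * ‖Q‖ ^ 2 * ‖y‖ ^ 2 := by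
  have hpyth := norm_sub_map_sq_add_norm_map_sub_sq hb 0
  rw [sub_zero, map_zero, sub_zero] at hpyth
  rw [hpyth, ← mul_pow, ← mul_pow]
  gcongr
  exact norm_weakDeriv_sub_translation_le hD₂ Q y

lemma norm_sub_translation_sub_proj_sq_le (hD : ∀ v, HasWeakDeriv μ F v (D v))
    (ha : ∀ v, inner ℝ (D v) (F - translation y F - D a) = 0) :
    ‖F - translation y F - D a‖ ^ 2 ≤ ‖D₂‖ ^ 2 * ‖y‖ ^ 4 :=
  calc ‖F - translation y F - D a‖ ^ 2
      ≤ ‖F - translation y F - D y‖ ^ 2 := by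
        rw [← norm_sub_map_sq_add_norm_map_sub_sq ha y]
        exact le_add_of_nonneg_right (sq_nonneg _)
    _ ≤ (‖D₂‖ * ‖y‖ ^ 2) ^ 2 := by gcongr; exact norm_sub_translation_sub_weakDeriv_le hD₂ hD y
    _ = ‖D₂‖ ^ 2 * ‖y‖ ^ 4 := by ring

lemma norm_sub_proj_sq_add_norm_sub_proj_sq_le (hD : ∀ v, HasWeakDeriv μ F v (D v))
    (ha : ∀ v, inner ℝ (D v) (F - translation y F - D a) = 0)
    (hb : ∀ v, inner ℝ (D v) (D Q - translation y (D Q) - D b) = 0) :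
    ‖F - translation y F - D a‖ ^ 2 + ‖D Q - translation y (D Q) - D b‖ ^ 2 ≤
      ‖D₂‖ ^ 2 * (‖Q‖ ^ 2 * ‖y‖ ^ 2 + ‖y‖ ^ 4) := by
  linarith [norm_sub_translation_sub_proj_sq_le hD₂ hD ha, sq_nonneg ‖D b‖,
    norm_sub_proj_sq_add_norm_proj_sq_le hD₂ hb]

end Hessian

end Taylor

section Radial
variable {E : Type*} [NormedAddCommGroup E] [InnerProductSpace ℝ E] [FiniteDimensional ℝ E]
  [MeasurableSpace E] [BorelSpace E]

/-- Composition with a linear isometry of the underlying space, as a linear isometry of `L²`. -/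
def pullback (R : E ≃ₗᵢ[ℝ] E) : Lp ℝ 2 (volume : Measure E) →ₗᵢ[ℝ] Lp ℝ 2 (volume : Measure E) :=
  Lp.compMeasurePreservingₗᵢ ℝ R R.measurePreserving

lemma coeFn_pullback (R : E ≃ₗᵢ[ℝ] E) (F : Lp ℝ 2 (volume : Measure E)) :
    pullback R F =ᵐ[volume] F ∘ R :=
  Lp.coeFn_compMeasurePreserving F R.measurePreserving

lemma pullback_toLp {f : E → ℝ} (hf : MemLp f 2 volume) {R : E ≃ₗᵢ[ℝ] E}
    (hR : ∀ x, f (R x) = f x) : pullback R (hf.toLp f) = hf.toLp f :=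
  (Lp.toLp_compMeasurePreserving hf R.measurePreserving).trans
    (MemLp.toLp_congr _ _ (.of_forall hR))

lemma pullback_translation (R : E ≃ₗᵢ[ℝ] E) (y : E) (F : Lp ℝ 2 (volume : Measure E)) :
    pullback R (translation y F) = translation (R.symm y) (pullback R F) := by
  refine Lp.ext ?_
  filter_upwards [coeFn_pullback R (translation y F), coeFn_translation (R.symm y) (pullback R F),
    R.measurePreserving.quasiMeasurePreserving.ae (coeFn_translation y F),
    (measurePreserving_sub_right volume (R.symm y)).quasiMeasurePreserving.ae
      (coeFn_pullback R F)] with x h₁ h₂ h₃ h₄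
  rw [h₁, h₂, h₄, Function.comp_apply, h₃, Function.comp_apply, map_sub, R.apply_symm_apply]

lemma HasWeakDeriv.comp_linearIsometryEquiv {f g : E → ℝ} {v : E}
    (h : HasWeakDeriv volume f v g) (R : E ≃ₗᵢ[ℝ] E) :
    HasWeakDeriv volume (f ∘ R) (R.symm v) (g ∘ R) := by
  intro ϑ hϑ hc
  have hR := h (ϑ ∘ R.symm) (hϑ.comp R.symm.toContinuousLinearEquiv.contDiff)
    (hc.comp_homeomorph R.symm.toHomeomorph)
  have hfderiv (x : E) : fderiv ℝ (ϑ ∘ R.symm) (R x) v = fderiv ℝ ϑ x (R.symm v) := by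
    have := R.symm.toContinuousLinearEquiv.comp_right_fderiv (f := ϑ) (x := R x)
    simpa using congr($this v)
  have hint (k : E → ℝ) : ∫ x, k (R x) = ∫ x, k x :=
    R.measurePreserving.integral_comp R.toHomeomorph.measurableEmbedding k
  rw [← hint, ← hint (fun x ↦ g x * _)] at hR
  simpa only [hfderiv, Function.comp_apply, R.symm_apply_apply] using hR

variable {F : Lp ℝ 2 (volume : Measure E)} {D : E →ₗ[ℝ] Lp ℝ 2 (volume : Measure E)}
  (hD : ∀ v, HasWeakDeriv volume F v (D v))
include hD

lemma pullback_weakDeriv {R : E ≃ₗᵢ[ℝ] E} (hR : pullback R F = F) (v : E) :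
    pullback R (D v) = D (R.symm v) := by
  have hFR : F =ᵐ[volume] F ∘ R := by simpa only [hR] using coeFn_pullback R F
  have hpull : HasWeakDeriv volume F (R.symm v) (pullback R (D v)) :=
    ((hD v).comp_linearIsometryEquiv R).congr_ae hFR.symm (coeFn_pullback R (D v)).symm
  exact Lp.ext (hpull.ae_eq (hD (R.symm v)) ((Lp.memLp _).locallyIntegrable one_le_two)
    ((Lp.memLp _).locallyIntegrable one_le_two))

lemma inner_weakDeriv_translation_neg (hF : pullback (LinearIsometryEquiv.neg ℝ) F = F)
    (v w z : E) :
    inner ℝ (D v) (translation (-z) (D w)) = inner ℝ (D v) (translation z (D w)) := by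
  have hodd (v : E) : pullback (LinearIsometryEquiv.neg ℝ) (D v) = -D v := by
    simpa using pullback_weakDeriv hD hF v
  rw [← (pullback (LinearIsometryEquiv.neg ℝ)).inner_map_map, pullback_translation, hodd, hodd]
  simp

lemma norm_weakDeriv_eq_of_norm_eq (hF : ∀ R : E ≃ₗᵢ[ℝ] E, pullback R F = F)
    {v w : E} (h : ‖v‖ = ‖w‖) : ‖D v‖ = ‖D w‖ := by
  have hvw : (ℝ ∙ (v - w))ᗮ.reflection.symm v = w := by
    rw [Submodule.reflection_symm]
    exact Submodule.reflection_sub h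
  rw [← (pullback (ℝ ∙ (v - w))ᗮ.reflection).norm_map, pullback_weakDeriv hD (hF _), hvw]

end Radial

section Estimates

lemma norm_inv_smul_sq_mul_add_le {V : Type*} [SeminormedAddCommGroup V] [NormedSpace ℝ V]
    {α M c : ℝ} (hα : 0 < α) (hM : 0 < M) {P : V} (hP : ‖P‖ ≤ c * α) (y : V) :
    ‖(α ^ 2 * M)⁻¹ • P‖ ^ 2 * ‖y‖ ^ 2 + ‖y‖ ^ 4 ≤
      ((c / M) ^ 2 + 1) * (‖y‖ ^ 2 / α ^ 2 + ‖y‖ ^ 4) := by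
  have hQ : ‖(α ^ 2 * M)⁻¹ • P‖ ≤ c / M / α := by
    rw [norm_smul, norm_of_nonneg (by positivity)]
    calc (α ^ 2 * M)⁻¹ * ‖P‖ ≤ (α ^ 2 * M)⁻¹ * (c * α) := by gcongr
      _ = c / M / α := by field_simp
  have hrest : 0 ≤ (c / M) ^ 2 * ‖y‖ ^ 4 + ‖y‖ ^ 2 / α ^ 2 := by positivity
  calc ‖(α ^ 2 * M)⁻¹ • P‖ ^ 2 * ‖y‖ ^ 2 + ‖y‖ ^ 4
      ≤ (c / M / α) ^ 2 * ‖y‖ ^ 2 + ‖y‖ ^ 4 := by gcongr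
    _ ≤ (c / M / α) ^ 2 * ‖y‖ ^ 2 + ‖y‖ ^ 4 +
        ((c / M) ^ 2 * ‖y‖ ^ 4 + ‖y‖ ^ 2 / α ^ 2) := le_add_of_nonneg_right hrest
    _ = ((c / M) ^ 2 + 1) * (‖y‖ ^ 2 / α ^ 2 + ‖y‖ ^ 4) := by ring

variable {E : Type*} [NormedAddCommGroup E] [InnerProductSpace ℝ E] [FiniteDimensional ℝ E]
  [MeasurableSpace E] [BorelSpace E] {F : Lp ℝ 2 (volume : Measure E)}
  {D : E →ₗ[ℝ] Lp ℝ 2 (volume : Measure E)} {D₂ : E →L[ℝ] E →L[ℝ] Lp ℝ 2 (volume : Measure E)}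
  (hD₂ : ∀ v w, HasWeakDeriv volume (D v) w (D₂ v w)) {a b y Q : E}
include hD₂

lemma abs_norm_proj_sub_translation_sq_sub_le (hD : ∀ v, HasWeakDeriv volume F v (D v))
    (hF : pullback (LinearIsometryEquiv.neg ℝ) F = F) {m : ℝ} (hm : 0 < m)
    (hDm : ∀ v w, inner ℝ (D v) (D w) = m * inner ℝ v w)
    (ha : ∀ v, inner ℝ (D v) (F - translation y F - D a) = 0) :
    |‖D a‖ ^ 2 - m * ‖y‖ ^ 2| ≤ ‖D₂‖ ^ 2 * ‖y‖ ^ 4 + ‖D₂‖ ^ 4 / (4 * m) * ‖y‖ ^ 6 := by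
  have hδ (v : E) := abs_inner_weakDeriv_sub_translation_sub_le hD₂ hD
    (inner_weakDeriv_translation_neg hD hF) v y
  calc |‖D a‖ ^ 2 - m * ‖y‖ ^ 2|
      ≤ 2 * (‖D₂‖ ^ 2 * ‖y‖ ^ 3 / 2) * ‖y‖ + (‖D₂‖ ^ 2 * ‖y‖ ^ 3 / 2) ^ 2 / m :=
        abs_norm_map_sq_sub_le hm hDm (by positivity) ha hδ
    _ = ‖D₂‖ ^ 2 * ‖y‖ ^ 4 + ‖D₂‖ ^ 4 / (4 * m) * ‖y‖ ^ 6 := by ring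

lemma abs_norm_proj_sq_add_norm_proj_sq_sub_le (hD : ∀ v, HasWeakDeriv volume F v (D v))
    (hF : pullback (LinearIsometryEquiv.neg ℝ) F = F) {m : ℝ} (hm : 0 < m)
    (hDm : ∀ v w, inner ℝ (D v) (D w) = m * inner ℝ v w)
    (ha : ∀ v, inner ℝ (D v) (F - translation y F - D a) = 0)
    (hb : ∀ v, inner ℝ (D v) (D Q - translation y (D Q) - D b) = 0) :
    |‖D a‖ ^ 2 + ‖D b‖ ^ 2 - m * ‖y‖ ^ 2| ≤
      ‖D₂‖ ^ 2 * (‖Q‖ ^ 2 * ‖y‖ ^ 2 + ‖y‖ ^ 4) + ‖D₂‖ ^ 4 / (4 * m) * ‖y‖ ^ 6 := by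
  have hDb : ‖D b‖ ^ 2 ≤ ‖D₂‖ ^ 2 * ‖Q‖ ^ 2 * ‖y‖ ^ 2 := by
    linarith [norm_sub_proj_sq_add_norm_proj_sq_le hD₂ hb,
      sq_nonneg ‖D Q - translation y (D Q) - D b‖]
  calc |‖D a‖ ^ 2 + ‖D b‖ ^ 2 - m * ‖y‖ ^ 2|
      = |(‖D a‖ ^ 2 - m * ‖y‖ ^ 2) + ‖D b‖ ^ 2| := by ring_nf
    _ ≤ |‖D a‖ ^ 2 - m * ‖y‖ ^ 2| + ‖D b‖ ^ 2 :=
        (abs_add_le _ _).trans_eq (by rw [abs_of_nonneg (sq_nonneg ‖D b‖)])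
    _ ≤ (‖D₂‖ ^ 2 * ‖y‖ ^ 4 + ‖D₂‖ ^ 4 / (4 * m) * ‖y‖ ^ 6) +
          ‖D₂‖ ^ 2 * ‖Q‖ ^ 2 * ‖y‖ ^ 2 :=
        add_le_add (abs_norm_proj_sub_translation_sq_sub_le hD₂ hD hF hm hDm ha) hDb
    _ = ‖D₂‖ ^ 2 * (‖Q‖ ^ 2 * ‖y‖ ^ 2 + ‖y‖ ^ 4) + ‖D₂‖ ^ 4 / (4 * m) * ‖y‖ ^ 6 := by ring

lemma exists_pos_forall_proj_estimates (hD : ∀ v, HasWeakDeriv volume F v (D v))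
    (hF : pullback (LinearIsometryEquiv.neg ℝ) F = F) {m M : ℝ} (hm : 0 < m) (hM : 0 < M)
    (hDm : ∀ v w, inner ℝ (D v) (D w) = m * inner ℝ v w) (c : ℝ) :
    ∃ C > 0, ∀ (α : ℝ) (P y a b : E), 0 < α → ‖P‖ ≤ c * α →
      (∀ v, inner ℝ (D v) (F - translation y F - D a) = 0) →
      (∀ v, inner ℝ (D v) (D ((α ^ 2 * M)⁻¹ • P) -
        translation y (D ((α ^ 2 * M)⁻¹ • P)) - D b) = 0) →
      ‖F - translation y F - D a‖ ^ 2 + ‖D ((α ^ 2 * M)⁻¹ • P) -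
        translation y (D ((α ^ 2 * M)⁻¹ • P)) - D b‖ ^ 2 ≤
          C * (‖y‖ ^ 2 / α ^ 2 + ‖y‖ ^ 4) ∧
      |‖D a‖ ^ 2 + ‖D b‖ ^ 2 - m * ‖y‖ ^ 2| ≤
        C * (‖y‖ ^ 2 / α ^ 2 + ‖y‖ ^ 4 + ‖y‖ ^ 6) := by
  obtain ⟨C, hC, hCK, hCm⟩ : ∃ C > 0,
      ‖D₂‖ ^ 2 * ((c / M) ^ 2 + 1) ≤ C ∧ ‖D₂‖ ^ 4 / (4 * m) ≤ C :=
    ⟨max 1 (max (‖D₂‖ ^ 2 * ((c / M) ^ 2 + 1)) (‖D₂‖ ^ 4 / (4 * m))), by simp⟩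
  refine ⟨C, hC, fun α P y a b hα hP ha hb ↦ ?_⟩
  have hK : ‖D₂‖ ^ 2 * (‖(α ^ 2 * M)⁻¹ • P‖ ^ 2 * ‖y‖ ^ 2 + ‖y‖ ^ 4) ≤
      C * (‖y‖ ^ 2 / α ^ 2 + ‖y‖ ^ 4) :=
    calc ‖D₂‖ ^ 2 * (‖(α ^ 2 * M)⁻¹ • P‖ ^ 2 * ‖y‖ ^ 2 + ‖y‖ ^ 4)
        ≤ ‖D₂‖ ^ 2 * (((c / M) ^ 2 + 1) * (‖y‖ ^ 2 / α ^ 2 + ‖y‖ ^ 4)) := by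
          gcongr
          exact norm_inv_smul_sq_mul_add_le hα hM hP y
      _ ≤ C * (‖y‖ ^ 2 / α ^ 2 + ‖y‖ ^ 4) := by rw [← mul_assoc]; gcongr
  refine ⟨(norm_sub_proj_sq_add_norm_sub_proj_sq_le hD₂ hD ha hb).trans hK, ?_⟩
  calc |‖D a‖ ^ 2 + ‖D b‖ ^ 2 - m * ‖y‖ ^ 2|
      ≤ ‖D₂‖ ^ 2 * (‖(α ^ 2 * M)⁻¹ • P‖ ^ 2 * ‖y‖ ^ 2 + ‖y‖ ^ 4) +
          ‖D₂‖ ^ 4 / (4 * m) * ‖y‖ ^ 6 :=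
        abs_norm_proj_sq_add_norm_proj_sq_sub_le hD₂ hD hF hm hDm ha hb
    _ ≤ C * (‖y‖ ^ 2 / α ^ 2 + ‖y‖ ^ 4) + C * ‖y‖ ^ 6 := by gcongr
    _ = C * (‖y‖ ^ 2 / α ^ 2 + ‖y‖ ^ 4 + ‖y‖ ^ 6) := by ring

end Estimates

section Coordinates
variable {ι X : Type*} [Fintype ι] [MeasurableSpace X] {μ : Measure X} {f : ι → X → ℝ}

/-- The linear map `v ↦ ∑ i, v i • f i` into `L²`. For `f i = ∂ᵢφ` it is the directional derivative
`v ↦ (v·∇)φ`. -/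
def dirDeriv (hf : ∀ i, MemLp (f i) 2 μ) : EuclideanSpace ℝ ι →L[ℝ] Lp ℝ 2 μ :=
  (EuclideanSpace.basisFun ι ℝ).toBasis.constrL fun i ↦ (hf i).toLp

variable (hf : ∀ i, MemLp (f i) 2 μ)

lemma dirDeriv_basisFun (i : ι) : dirDeriv hf (EuclideanSpace.basisFun ι ℝ i) = (hf i).toLp := by
  rw [← OrthonormalBasis.coe_toBasis]
  exact Module.Basis.constrL_basis ..

lemma dirDeriv_apply (v : EuclideanSpace ℝ ι) : dirDeriv hf v = ∑ i, v i • (hf i).toLp := by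
  rw [dirDeriv, Module.Basis.constrL_apply]
  simp

lemma coeFn_dirDeriv (v : EuclideanSpace ℝ ι) :
    dirDeriv hf v =ᵐ[μ] fun x ↦ ∑ i, v i * f i x := by
  rw [dirDeriv_apply]
  filter_upwards [Lp.coeFn_finsetSum Finset.univ fun i ↦ v i • (hf i).toLp,
    ae_all_iff.mpr fun i ↦ Lp.coeFn_smul (v i) (hf i).toLp,
    ae_all_iff.mpr fun i ↦ (hf i).coeFn_toLp] with x hsum hsmul hcoe
  simp only [hsum, Finset.sum_apply, hsmul, Pi.smul_apply, hcoe, smul_eq_mul]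

lemma inner_dirDeriv_eq_zero {U : Lp ℝ 2 μ} (hU : ∀ i, inner ℝ (hf i).toLp U = 0)
    (v : EuclideanSpace ℝ ι) : inner ℝ (dirDeriv hf v) U = 0 := by
  simp [dirDeriv_apply, sum_inner, real_inner_smul_left, hU]

lemma sum_norm_sq_dirDeriv_basisFun :
    ∑ i, ‖dirDeriv hf (EuclideanSpace.basisFun ι ℝ i)‖ ^ 2 = ∫ x, ∑ i, f i x ^ 2 ∂μ := by
  rw [integral_finsetSum _ fun i _ ↦ (hf i).integrable_sq]
  refine Finset.sum_congr rfl fun i _ ↦ ?_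
  rw [dirDeriv_basisFun, ← real_inner_self_eq_norm_sq, inner_toLp_left]
  exact integral_congr_ae ((hf i).coeFn_toLp.mono fun x hx ↦ by simp only [hx, sq])

/-- Real and imaginary parts decouple because the spanning functions are real. -/
lemma exists_dirDeriv_decomposition {U V : Lp ℝ 2 μ} {w₀ w₁ : X → ℂ}
    (hspan : ∃ a : ι → ℂ, ∀ᵐ x ∂μ, w₀ x = ∑ i, a i * (f i x : ℂ))
    (horth : ∀ i, ∫ x, conj (f i x : ℂ) * w₁ x ∂μ = 0)
    (hsum : ∀ᵐ x ∂μ, (U x : ℂ) + (V x : ℂ) * I = w₀ x + w₁ x) :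
    ∃ a b : EuclideanSpace ℝ ι,
      (∀ v, inner ℝ (dirDeriv hf v) (U - dirDeriv hf a) = 0) ∧
      (∀ v, inner ℝ (dirDeriv hf v) (V - dirDeriv hf b) = 0) ∧
      ∫ x, ‖w₀ x‖ ^ 2 ∂μ = ‖dirDeriv hf a‖ ^ 2 + ‖dirDeriv hf b‖ ^ 2 ∧
      ∫ x, ‖w₁ x‖ ^ 2 ∂μ = ‖U - dirDeriv hf a‖ ^ 2 + ‖V - dirDeriv hf b‖ ^ 2 := by
  obtain ⟨c, hc⟩ := hspan
  let a : EuclideanSpace ℝ ι := WithLp.toLp 2 fun i ↦ (c i).re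
  let b : EuclideanSpace ℝ ι := WithLp.toLp 2 fun i ↦ (c i).im
  have hw₀ : ∀ᵐ x ∂μ, w₀ x = (dirDeriv hf a x : ℂ) + (dirDeriv hf b x : ℂ) * I := by
    filter_upwards [hc, coeFn_dirDeriv hf a, coeFn_dirDeriv hf b] with x hx ha hb
    rw [hx, ha, hb]
    apply Complex.ext <;> simp [a, b]
  have hw₁ : ∀ᵐ x ∂μ,
      w₁ x = ((U - dirDeriv hf a) x : ℂ) + ((V - dirDeriv hf b) x : ℂ) * I := by
    filter_upwards [hsum, hw₀, Lp.coeFn_sub U (dirDeriv hf a), Lp.coeFn_sub V (dirDeriv hf b)]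
      with x hx h₀ hU hV
    rw [hU, hV, ← add_right_inj (w₀ x), ← hx, h₀]
    simp only [Pi.sub_apply, ofReal_sub]
    ring
  have hinner (i : ι) : inner ℝ (hf i).toLp (U - dirDeriv hf a) = 0 ∧
      inner ℝ (hf i).toLp (V - dirDeriv hf b) = 0 := by
    have := horth i
    rw [integral_conj_mul_of_ae_eq_add_mul_I (hf i) hw₁] at this
    simpa [Complex.ext_iff] using this
  exact ⟨a, b, inner_dirDeriv_eq_zero hf fun i ↦ (hinner i).1,
    inner_dirDeriv_eq_zero hf fun i ↦ (hinner i).2,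
    integral_norm_sq_of_ae_eq_add_mul_I hw₀, integral_norm_sq_of_ae_eq_add_mul_I hw₁⟩

end Coordinates

section PartialDerivatives
variable {ι : Type*} [Fintype ι] {φ : EuclideanSpace ℝ ι → ℝ}
  {φ1 : ι → EuclideanSpace ℝ ι → ℝ} {φ2 : ι → ι → EuclideanSpace ℝ ι → ℝ}
  (hφ : MemLp φ 2 volume) (hφ1 : ∀ i, MemLp (φ1 i) 2 volume)
  (hφ2 : ∀ i j, MemLp (φ2 i j) 2 volume)

/-- The second derivative `(v, w) ↦ ∑ i, ∑ j, v i • w j • f i j` for `f i j = ∂ⱼ∂ᵢφ`. -/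
def dirDeriv₂ : EuclideanSpace ℝ ι →L[ℝ] EuclideanSpace ℝ ι →L[ℝ]
    Lp ℝ 2 (volume : Measure (EuclideanSpace ℝ ι)) :=
  (EuclideanSpace.basisFun ι ℝ).toBasis.constrL fun i ↦ dirDeriv (hφ2 i)

lemma ae_sub_translation_add_mul_I_eq (κ : ℝ) (P y : EuclideanSpace ℝ ι) :
    ∀ᵐ x, ((hφ.toLp φ - translation y (hφ.toLp φ)) x : ℂ) +
        ((dirDeriv hφ1 (κ • P) - translation y (dirDeriv hφ1 (κ • P))) x : ℂ) * I =
      ((φ x - φ (x - y) : ℝ) : ℂ) +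
        I * (κ : ℂ) * ∑ i, (P i : ℂ) * ((φ1 i x - φ1 i (x - y) : ℝ) : ℂ) := by
  filter_upwards [coeFn_sub_translation_of_ae_eq hφ.coeFn_toLp y,
    coeFn_sub_translation_of_ae_eq (coeFn_dirDeriv hφ1 (κ • P)) y] with x hU hV
  rw [hU, hV, ← Finset.sum_sub_distrib]
  simp only [PiLp.smul_apply, smul_eq_mul, mul_assoc, ← mul_sub, ← Finset.mul_sum]
  push_cast
  ring

variable [DecidableEq ι]

lemma hasWeakDeriv_toLp_dirDeriv
    (h : ∀ i, HasWeakDeriv volume φ (EuclideanSpace.single i 1) (φ1 i))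
    (v : EuclideanSpace ℝ ι) : HasWeakDeriv volume (hφ.toLp φ) v (dirDeriv hφ1 v) := by
  refine HasWeakDeriv.of_basis (μ := volume) (D := dirDeriv hφ1)
    (EuclideanSpace.basisFun ι ℝ).toBasis ((Lp.memLp _).locallyIntegrable one_le_two) (fun i ↦ ?_) v
  rw [OrthonormalBasis.coe_toBasis, ContinuousLinearMap.coe_coe, dirDeriv_basisFun,
    EuclideanSpace.basisFun_apply]
  exact (h i).congr_ae hφ.coeFn_toLp.symm (hφ1 i).coeFn_toLp.symm

lemma hasWeakDeriv_dirDeriv_dirDeriv₂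
    (h : ∀ i j, HasWeakDeriv volume (φ1 i) (EuclideanSpace.single j 1) (φ2 i j))
    (v w : EuclideanSpace ℝ ι) :
    HasWeakDeriv volume (dirDeriv hφ1 v) w (dirDeriv₂ hφ2 v w) := by
  refine HasWeakDeriv.map_of_basis (μ := volume) (D := dirDeriv hφ1)
    (D' := ((dirDeriv₂ hφ2).flip w).toLinearMap) (EuclideanSpace.basisFun ι ℝ).toBasis
    (fun i ↦ ?_) v
  have hD₂ : dirDeriv₂ hφ2 ((EuclideanSpace.basisFun ι ℝ).toBasis i) = dirDeriv (hφ2 i) :=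
    Module.Basis.constrL_basis ..
  rw [ContinuousLinearMap.coe_coe, ContinuousLinearMap.coe_coe, ContinuousLinearMap.flip_apply,
    hD₂, OrthonormalBasis.coe_toBasis, dirDeriv_basisFun]
  exact hasWeakDeriv_toLp_dirDeriv (hφ1 i) (hφ2 i) (h i) w

lemma inner_dirDeriv_dirDeriv_of_pullback_eq [Nonempty ι]
    (h : ∀ i, HasWeakDeriv volume φ (EuclideanSpace.single i 1) (φ1 i))
    (hF : ∀ R : EuclideanSpace ℝ ι ≃ₗᵢ[ℝ] EuclideanSpace ℝ ι,
      pullback R (hφ.toLp φ) = hφ.toLp φ) (v w : EuclideanSpace ℝ ι) :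
    inner ℝ (dirDeriv hφ1 v) (dirDeriv hφ1 w) =
      (∫ x, ∑ i, φ1 i x ^ 2) / Fintype.card ι * inner ℝ v w := by
  rw [← sum_norm_sq_dirDeriv_basisFun hφ1]
  exact inner_map_map_eq_of_norm_map_eq (D := (dirDeriv hφ1).toLinearMap)
    (EuclideanSpace.basisFun ι ℝ)
    (fun _ _ ↦ norm_weakDeriv_eq_of_norm_eq (hasWeakDeriv_toLp_dirDeriv hφ hφ1 h) hF) v w

end PartialDerivatives

theorem statement10_general {ι : Type*} [Fintype ι] [DecidableEq ι] [Nontrivial ι]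
    (φ : EuclideanSpace ℝ ι → ℝ) (φ1 : ι → EuclideanSpace ℝ ι → ℝ)
    (φ2 : ι → ι → EuclideanSpace ℝ ι → ℝ)
    (hφ : MemLp φ 2 volume) (hφ1 : ∀ i, MemLp (φ1 i) 2 volume)
    (hφ2 : ∀ i j, MemLp (φ2 i j) 2 volume)
    (hweak1 : ∀ i, HasWeakDeriv volume φ (EuclideanSpace.single i 1) (φ1 i))
    (hweak2 : ∀ i j, HasWeakDeriv volume (φ1 i) (EuclideanSpace.single j 1) (φ2 i j))
    (hradial : ∀ R : EuclideanSpace ℝ ι ≃ₗᵢ[ℝ] EuclideanSpace ℝ ι,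
      LinearMap.det (R.toLinearEquiv : EuclideanSpace ℝ ι →ₗ[ℝ] EuclideanSpace ℝ ι) = 1 →
        ∀ x, φ (R x) = φ x)
    (hgrad : 0 < ∫ x, ∑ i, φ1 i x ^ 2) (lam M : ℝ)
    (hlam : lam = (∫ x, ∑ i, φ1 i x ^ 2) / (2 * Fintype.card ι)) (hM : 0 < M)
    (w : ℝ → EuclideanSpace ℝ ι → EuclideanSpace ℝ ι → EuclideanSpace ℝ ι → ℂ)
    (hw : ∀ α P y x, w α P y x = ((φ x - φ (x - y) : ℝ) : ℂ) + I * (((α ^ 2 * M)⁻¹ : ℝ) : ℂ) *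
      ∑ i, (P i : ℂ) * ((φ1 i x - φ1 i (x - y) : ℝ) : ℂ)) :
    ∀ c : ℝ, ∃ C > 0, ∀ (α : ℝ) (P y : EuclideanSpace ℝ ι), 0 < α → ‖P‖ ≤ c * α →
      ∀ w0 w1 : EuclideanSpace ℝ ι → ℂ,
        (∃ a : ι → ℂ, ∀ᵐ x, w0 x = ∑ i, a i * (φ1 i x : ℂ)) →
        (∀ i, ∫ x, conj ((φ1 i x : ℂ)) * w1 x = 0) →
        (∀ᵐ x, w α P y x = w0 x + w1 x) →
        (∫ x, ‖w1 x‖ ^ 2) ≤ C * (‖y‖ ^ 2 / α ^ 2 + ‖y‖ ^ 4) ∧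
        |(∫ x, ‖w0 x‖ ^ 2) - 2 * lam * ‖y‖ ^ 2| ≤
          C * (‖y‖ ^ 2 / α ^ 2 + ‖y‖ ^ 4 + ‖y‖ ^ 6) := by
  intro c
  have hm : 0 < 2 * lam := by rw [hlam]; positivity
  have hD := hasWeakDeriv_toLp_dirDeriv hφ hφ1 hweak1
  have hD₂ := hasWeakDeriv_dirDeriv_dirDeriv₂ hφ1 hφ2 hweak2
  have hF (R : EuclideanSpace ℝ ι ≃ₗᵢ[ℝ] EuclideanSpace ℝ ι) :
      pullback R (hφ.toLp φ) = hφ.toLp φ :=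
    pullback_toLp hφ (apply_linearIsometryEquiv_of_rotation_invariant
      (by simpa using Fintype.one_lt_card) hradial R)
  have hconformal (v u : EuclideanSpace ℝ ι) :
      inner ℝ (dirDeriv hφ1 v) (dirDeriv hφ1 u) = 2 * lam * inner ℝ v u := by
    rw [inner_dirDeriv_dirDeriv_of_pullback_eq hφ hφ1 hweak1 hF, hlam]
    field_simp
  obtain ⟨C, hC, hest⟩ := exists_pos_forall_proj_estimates hD₂ hD (hF _) hm hM hconformal c
  refine ⟨C, hC, fun α P y hα hP w0 w1 hspan horth hsum ↦ ?_⟩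
  obtain ⟨a, b, ha, hb, hw0, hw1⟩ := exists_dirDeriv_decomposition hφ1 hspan horth (by
    filter_upwards [ae_sub_translation_add_mul_I_eq hφ hφ1 (α ^ 2 * M)⁻¹ P y, hsum] with x h₁ h₂
    rw [h₁, ← hw, h₂])
  rw [hw0, hw1]
  exact hest α P y a b hα hP ha hb

/-- Let `φ ∈ H³(ℝ³;ℝ)` be radial with `∇φ ≠ 0`, let
`λ = ‖∇φ‖²/6`, `M^{LP} = (2/3)‖∇φ‖²`, and let `w_{P,y} = φ_P − τ_y φ_P` with
`φ_P = φ + i(α²M^{LP})⁻¹(P·∇)φ`. Writing `w_{P,y} = w₀ + w₁` for its (unique a.e.)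
orthogonal decomposition in `L²(ℝ³;ℂ)` with `w₀ ∈ span{∂₁φ,∂₂φ,∂₃φ}` and
`w₁ ⊥ span{∂₁φ,∂₂φ,∂₃φ}` (i.e. `w₀ = Π₀ w_{P,y}`, `w₁ = Π₁ w_{P,y}`), for every
`c > 0` there is `C > 0` such that for all `y`, all `α > 0` and all `|P| ≤ cα`:
`‖Π₁ w_{P,y}‖² ≤ C(α⁻²|y|² + |y|⁴)` and
`| ‖Π₀ w_{P,y}‖² − 2λ|y|² | ≤ C(α⁻²|y|² + |y|⁴ + |y|⁶)`. -/
theorem statement10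
    (φ : EuclideanSpace ℝ (Fin 3) → ℝ)
    (φ1 : Fin 3 → EuclideanSpace ℝ (Fin 3) → ℝ)
    (φ2 : Fin 3 → Fin 3 → EuclideanSpace ℝ (Fin 3) → ℝ)
    (φ3 : Fin 3 → Fin 3 → Fin 3 → EuclideanSpace ℝ (Fin 3) → ℝ)
    (hφ : MemLp φ 2 volume)
    (hφ1 : ∀ i, MemLp (φ1 i) 2 volume)
    (hφ2 : ∀ i j, MemLp (φ2 i j) 2 volume)
    (hφ3 : ∀ i j k, MemLp (φ3 i j k) 2 volume)
    (hweak1 : ∀ i, ∀ ϑ : EuclideanSpace ℝ (Fin 3) → ℝ,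
      ContDiff ℝ (⊤ : ℕ∞) ϑ → HasCompactSupport ϑ →
      ∫ x, φ x * fderiv ℝ ϑ x (EuclideanSpace.single i 1) = - ∫ x, φ1 i x * ϑ x)
    (hweak2 : ∀ i j, ∀ ϑ : EuclideanSpace ℝ (Fin 3) → ℝ,
      ContDiff ℝ (⊤ : ℕ∞) ϑ → HasCompactSupport ϑ →
      ∫ x, φ1 i x * fderiv ℝ ϑ x (EuclideanSpace.single j 1) = - ∫ x, φ2 i j x * ϑ x)
    (hweak3 : ∀ i j k, ∀ ϑ : EuclideanSpace ℝ (Fin 3) → ℝ,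
      ContDiff ℝ (⊤ : ℕ∞) ϑ → HasCompactSupport ϑ →
      ∫ x, φ2 i j x * fderiv ℝ ϑ x (EuclideanSpace.single k 1) = - ∫ x, φ3 i j k x * ϑ x)
    (hradial : ∀ R : EuclideanSpace ℝ (Fin 3) ≃ₗᵢ[ℝ] EuclideanSpace ℝ (Fin 3),
      LinearMap.det (R.toLinearEquiv : EuclideanSpace ℝ (Fin 3) →ₗ[ℝ]
        EuclideanSpace ℝ (Fin 3)) = 1 → ∀ x, φ (R x) = φ x)
    (hgrad : 0 < ∫ x, ∑ i, φ1 i x ^ 2)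
    (lam M : ℝ)
    (hlam : lam = (∫ x, ∑ i, φ1 i x ^ 2) / 6)
    (hM : M = (2 / 3) * ∫ x, ∑ i, φ1 i x ^ 2)
    (w : ℝ → EuclideanSpace ℝ (Fin 3) → EuclideanSpace ℝ (Fin 3) →
      EuclideanSpace ℝ (Fin 3) → ℂ)
    (hw : ∀ α P y x, w α P y x =
      ((φ x - φ (x - y) : ℝ) : ℂ) +
        Complex.I * (((α ^ 2 * M)⁻¹ : ℝ) : ℂ) *
          ∑ i, (P i : ℂ) * ((φ1 i x - φ1 i (x - y) : ℝ) : ℂ)) :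
    ∀ c > 0, ∃ C > 0, ∀ (α : ℝ) (P y : EuclideanSpace ℝ (Fin 3)),
      0 < α → ‖P‖ ≤ c * α →
      ∀ w0 w1 : EuclideanSpace ℝ (Fin 3) → ℂ,
        (∃ a : Fin 3 → ℂ, ∀ᵐ x, w0 x = ∑ i, a i * (φ1 i x : ℂ)) →
        (∀ i, ∫ x, conj ((φ1 i x : ℂ)) * w1 x = 0) →
        (∀ᵐ x, w α P y x = w0 x + w1 x) →
        (∫ x, ‖w1 x‖ ^ 2) ≤ C * (‖y‖ ^ 2 / α ^ 2 + ‖y‖ ^ 4) ∧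
        |(∫ x, ‖w0 x‖ ^ 2) - 2 * lam * ‖y‖ ^ 2| ≤
          C * (‖y‖ ^ 2 / α ^ 2 + ‖y‖ ^ 4 + ‖y‖ ^ 6) := by
  exact fun c _ ↦ statement10_general φ φ1 φ2 hφ hφ1 hφ2 hweak1 hweak2 hradial hgrad lam M
    (by rw [hlam]; norm_num) (by rw [hM]; positivity) w hw c
end
end

section
/- Let ψ : ℝ³ → (0,∞) be smooth, radial, with ‖ψ‖_{L²} = 1, and suppose ψ together with all its partial derivatives up to second order is bounded by C₀ e^{−|x|/C₀} for some C₀ > 0. Define φ(z) := ∫_{ℝ³} ψ(x)² / (2π²|z−x|²) dx, H(y) := ∫_{ℝ³} ψ(x)ψ(x+y) dx, and l_y(z) := H(y) φ(z) − ∫_{ℝ³} ψ(x) ψ(x+y) / (2π² |x−z|²) dx. Then for k = 0, 1: sup_{y ∈ ℝ³} ‖∇^k l_y‖_{L²} < ∞, and for every integer n ≥ 0, ∫_{ℝ³} |y|^n ‖∇^k l_y‖_{L²} dy < ∞. -/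
open MeasureTheory Real

noncomputable section

/-!
Since `|x| + |x + y| ≥ |y|`, the density `ψ(x) ψ(x + y)` and its gradient in `x` are at most
`C exp (-a |y| / 2) exp (-a |x| / 2)`: they decay exponentially in both variables. The potential of
a density with exponential decay inherits the decay of the kernel, by Peetre's inequality
`(1 + |z|)ˢ ≤ (1 + |x|)ˢ (1 + |z - x|)ˢ`, and its gradient is the potential of the gradient of the
density. Hence `|∇ᵏ l_y(z)| ≤ B exp (-a |y| / 2) (1 + |z|)⁻²` for `k = 0, 1`, and `(1 + |z|)⁻²` is
square integrable on `ℝ³` because `3 < 4`. So the `L²` norms decay exponentially in `y`.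
-/

section Potentials

open Filter Asymptotics Module
open scoped Convolution Topology

section ExponentialDecay

lemma exists_one_add_rpow_mul_exp_neg_le (p : ℝ) {a : ℝ} (ha : 0 < a) :
    ∃ B : ℝ, ∀ t : ℝ, 0 ≤ t → (1 + t) ^ p * exp (-a * t) ≤ B := by
  set n := ⌈p⌉₊
  refine ⟨n.factorial / a ^ n * exp a, fun t ht ↦ ?_⟩
  have hexp : (1 + t) ^ n ≤ n.factorial / a ^ n * exp (a * (1 + t)) := by
    have := Real.pow_div_factorial_le_exp (a * (1 + t)) (by positivity) n
    rw [mul_pow, div_le_iff₀ (by positivity)] at this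
    rw [div_mul_eq_mul_div, le_div_iff₀ (by positivity)]
    linarith
  calc (1 + t) ^ p * exp (-a * t)
      ≤ (1 + t) ^ n * exp (-a * t) := by
        gcongr
        rw [← rpow_natCast]
        exact rpow_le_rpow_of_exponent_le (by linarith) (Nat.le_ceil p)
    _ ≤ n.factorial / a ^ n * exp (a * (1 + t)) * exp (-a * t) := by gcongr
    _ = n.factorial / a ^ n * exp a := by
        rw [mul_assoc, ← exp_add]
        ring_nf

section Pointwise

variable {E : Type*} [SeminormedAddCommGroup E] {a : ℝ}

lemma one_add_norm_rpow_le_mul {s : ℝ} (hs : 0 ≤ s) (z x : E) :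
    (1 + ‖z‖) ^ s ≤ (1 + ‖x‖) ^ s * (1 + ‖z - x‖) ^ s := by
  rw [← mul_rpow (by positivity) (by positivity)]
  gcongr
  nlinarith [norm_le_norm_add_norm_sub' z x, norm_nonneg x, norm_nonneg (z - x)]

lemma exp_neg_norm_le_one (ha : 0 ≤ a) (x : E) : exp (-a * ‖x‖) ≤ 1 := by
  rw [exp_le_one_iff, neg_mul, neg_nonpos]
  positivity

lemma exp_neg_norm_le_of_norm_sub_le (ha : 0 ≤ a) {u v : E} {r : ℝ} (h : ‖u - v‖ ≤ r) :
    exp (-a * ‖u‖) ≤ exp (a * r) * exp (-a * ‖v‖) := by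
  rw [← exp_add, exp_le_exp]
  have : ‖v‖ ≤ ‖u‖ + r := (norm_le_norm_add_norm_sub u v).trans (by gcongr)
  nlinarith

lemma exp_neg_norm_mul_exp_neg_norm_add_le (ha : 0 ≤ a) (x y : E) :
    exp (-a * ‖x‖) * exp (-a * ‖x + y‖) ≤ exp (-(a / 2) * ‖y‖) * exp (-(a / 2) * ‖x‖) := by
  rw [← exp_add, ← exp_add, exp_le_exp]
  have : ‖y‖ ≤ ‖x + y‖ + ‖x‖ := by simpa using norm_sub_le (x + y) x
  nlinarith [norm_nonneg (x + y)]

end Pointwise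

variable {E : Type*} [NormedAddCommGroup E] [NormedSpace ℝ E] [FiniteDimensional ℝ E]
  [MeasurableSpace E] [BorelSpace E] (μ : Measure E) [μ.IsAddHaarMeasure] {a : ℝ}

lemma integrable_one_add_norm_rpow_mul_exp_neg (p : ℝ) (ha : 0 < a) :
    Integrable (fun x : E ↦ (1 + ‖x‖) ^ p * exp (-a * ‖x‖)) μ := by
  obtain ⟨r, hr⟩ := exists_gt (finrank ℝ E : ℝ)
  obtain ⟨B, hB⟩ := exists_one_add_rpow_mul_exp_neg_le (p + r) ha
  refine ((integrable_one_add_norm hr).const_mul B).mono'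
    (by fun_prop) (.of_forall fun x ↦ ?_)
  rw [norm_of_nonneg (by positivity), rpow_neg (by positivity), ← div_eq_mul_inv,
    le_div_iff₀ (by positivity)]
  calc (1 + ‖x‖) ^ p * exp (-a * ‖x‖) * (1 + ‖x‖) ^ r
      = (1 + ‖x‖) ^ (p + r) * exp (-a * ‖x‖) := by
        rw [rpow_add (by positivity), mul_right_comm]
    _ ≤ B := hB _ (norm_nonneg x)

lemma integrable_norm_pow_mul_exp_neg (n : ℕ) (ha : 0 < a) :
    Integrable (fun x : E ↦ ‖x‖ ^ n * exp (-a * ‖x‖)) μ := by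
  refine (integrable_one_add_norm_rpow_mul_exp_neg μ n ha).mono' (by fun_prop)
    (.of_forall fun x ↦ ?_)
  rw [norm_of_nonneg (by positivity), rpow_natCast]
  gcongr
  linarith

lemma integrable_exp_neg_norm (ha : 0 < a) : Integrable (fun x : E ↦ exp (-a * ‖x‖)) μ := by
  simpa using integrable_norm_pow_mul_exp_neg μ 0 ha

end ExponentialDecay

/-- `f` decays exponentially at rate `a`, with the explicit constant `C`. The constant is kept
as a parameter because the estimates must be uniform over families of functions. -/
def HasExpDecay {E F : Type*} [Norm E] [Norm F] (f : E → F) (C a : ℝ) : Prop :=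
  ∀ x, ‖f x‖ ≤ C * exp (-a * ‖x‖)

namespace HasExpDecay

section

variable {E F : Type*} [SeminormedAddCommGroup E] [SeminormedAddCommGroup F] {f : E → F}
  {C C' a : ℝ}

lemma nonneg (hf : HasExpDecay f C a) : 0 ≤ C := by
  simpa using (norm_nonneg _).trans (hf 0)

lemma mono (hf : HasExpDecay f C a) (hC : C ≤ C') : HasExpDecay f C' a :=
  fun x ↦ (hf x).trans (by gcongr)

lemma norm_le (hf : HasExpDecay f C a) (ha : 0 ≤ a) (x : E) : ‖f x‖ ≤ C :=
  (hf x).trans (mul_le_of_le_one_right hf.nonneg (exp_neg_norm_le_one ha x))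

lemma norm_mul_norm_add_le {G : Type*} [SeminormedAddCommGroup G] {g : E → G}
    (hf : HasExpDecay f C a) (hg : HasExpDecay g C' a) (ha : 0 ≤ a) (x y : E) :
    ‖f x‖ * ‖g (x + y)‖ ≤ C * C' * exp (-(a / 2) * ‖y‖) * exp (-(a / 2) * ‖x‖) := by
  have hC := hf.nonneg
  have hC' := hg.nonneg
  calc ‖f x‖ * ‖g (x + y)‖
      ≤ C * exp (-a * ‖x‖) * (C' * exp (-a * ‖x + y‖)) := by
        gcongr
        exacts [hf x, hg (x + y)]
    _ = C * C' * (exp (-a * ‖x‖) * exp (-a * ‖x + y‖)) := by ring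
    _ ≤ C * C' * (exp (-(a / 2) * ‖y‖) * exp (-(a / 2) * ‖x‖)) :=
        mul_le_mul_of_nonneg_left (exp_neg_norm_mul_exp_neg_norm_add_le ha x y) (by positivity)
    _ = _ := by ring

lemma norm_smul_le [NormedSpace ℝ F] (hf : HasExpDecay f C a) (c : ℝ) (x : E) :
    ‖c • f x‖ ≤ C * (|c| * exp (-a * ‖x‖)) := by
  rw [norm_smul, norm_eq_abs, mul_left_comm]
  exact mul_le_mul_of_nonneg_left (hf x) (abs_nonneg c)

lemma norm_smul_le_of_dist_le [NormedSpace ℝ F] (hf : HasExpDecay f C a) (ha : 0 ≤ a) (c : ℝ)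
    {x z w : E} {r : ℝ} (hw : dist w z ≤ r) :
    ‖c • f (w - x)‖ ≤ C * exp (a * r) * (|c| * exp (-a * ‖z - x‖)) := by
  have hC := hf.nonneg
  have hwz : ‖w - x - (z - x)‖ ≤ r := by rwa [sub_sub_sub_cancel_right, ← dist_eq_norm]
  calc ‖c • f (w - x)‖
      ≤ C * (|c| * exp (-a * ‖w - x‖)) := hf.norm_smul_le c _
    _ ≤ C * (|c| * (exp (a * r) * exp (-a * ‖z - x‖))) := by
        gcongr
        exact exp_neg_norm_le_of_norm_sub_le ha hwz
    _ = C * exp (a * r) * (|c| * exp (-a * ‖z - x‖)) := by ring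

end

variable {E F : Type*} [NormedAddCommGroup E] [NormedSpace ℝ E] [FiniteDimensional ℝ E]
  [MeasurableSpace E] [BorelSpace E] {μ : Measure E} [μ.IsAddHaarMeasure]
  [NormedAddCommGroup F] [NormedSpace ℝ F] {f : E → F} {C a : ℝ}

lemma norm_integral_le (hf : HasExpDecay f C a) (ha : 0 < a) :
    ‖∫ x, f x ∂μ‖ ≤ C * ∫ x, exp (-a * ‖x‖) ∂μ := by
  rw [← integral_const_mul]
  exact norm_integral_le_of_norm_le ((integrable_exp_neg_norm μ ha).const_mul C)
    (.of_forall hf)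

lemma integrable_norm_pow_smul (hf : HasExpDecay f C a) (ha : 0 < a)
    (hfm : AEStronglyMeasurable f μ) (n : ℕ) : Integrable (fun x ↦ ‖x‖ ^ n • f x) μ := by
  refine ((integrable_norm_pow_mul_exp_neg μ n ha).const_mul C).mono' (by fun_prop)
    (.of_forall fun x ↦ ?_)
  rw [norm_smul, norm_of_nonneg (by positivity), mul_left_comm]
  exact mul_le_mul_of_nonneg_left (hf x) (by positivity)

end HasExpDecay

/-- A locally integrable scalar kernel that is `O(|x|⁻ˢ)` at infinity, as is the form factor of
the polaron with `s = 2`. -/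
structure IsDecayingKernel {E : Type*} [NormedAddCommGroup E] [MeasurableSpace E]
    (k : E → ℝ) (s : ℝ) (μ : Measure E) : Prop where
  locallyIntegrable : LocallyIntegrable k μ
  isBigO : k =O[cocompact E] fun x ↦ (1 + ‖x‖) ^ (-s)

namespace IsDecayingKernel

lemma aestronglyMeasurable {E : Type*} [NormedAddCommGroup E] [SecondCountableTopology E]
    [MeasurableSpace E] {μ : Measure E} {k : E → ℝ} {s : ℝ} (hk : IsDecayingKernel k s μ) :
    AEStronglyMeasurable k μ :=
  hk.locallyIntegrable.aestronglyMeasurable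

lemma exists_integrable_one_add_norm_rpow_mul_abs_le {E : Type*} [NormedAddCommGroup E]
    [MeasurableSpace E] [BorelSpace E] {μ : Measure E} {k : E → ℝ} {s : ℝ}
    (hk : IsDecayingKernel k s μ) :
    ∃ f : E → ℝ, Integrable f μ ∧ 0 ≤ f ∧ ∃ κ, ∀ x, (1 + ‖x‖) ^ s * |k x| ≤ f x + κ := by
  obtain ⟨κ, hκ, hO⟩ := hk.isBigO.exists_nonneg
  obtain ⟨K, hK, hKO⟩ := mem_cocompact.1 hO.bound
  have hf : IntegrableOn (fun x ↦ (1 + ‖x‖) ^ s * |k x|) K μ := by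
    refine IntegrableOn.continuousOn_mul (Continuous.continuousOn ?_)
      (hk.locallyIntegrable.integrableOn_isCompact hK).norm hK
    exact (continuous_const.add continuous_norm).rpow_const fun x ↦ .inl
      (show (1 + ‖x‖ : ℝ) ≠ 0 by positivity)
  refine ⟨K.indicator fun x ↦ (1 + ‖x‖) ^ s * |k x|, hf.integrable_indicator hK.measurableSet,
    Set.indicator_nonneg fun x _ ↦ by positivity, κ, fun x ↦ ?_⟩
  by_cases hx : x ∈ K
  · simpa [hx] using hκ
  · have hle : |k x| ≤ κ * ((1 + ‖x‖) ^ s)⁻¹ := by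
      simpa [rpow_neg (show 0 ≤ 1 + ‖x‖ by positivity), abs_of_nonneg
        (show 0 ≤ (1 + ‖x‖) ^ s by positivity)] using hKO hx
    rw [← div_eq_mul_inv, le_div_iff₀ (by positivity)] at hle
    simpa [hx, mul_comm] using hle

variable {E : Type*} [NormedAddCommGroup E] [NormedSpace ℝ E] [FiniteDimensional ℝ E]
  [MeasurableSpace E] [BorelSpace E] {μ : Measure E} [μ.IsAddHaarMeasure] {k : E → ℝ} {s a : ℝ}

lemma exists_integral_abs_mul_exp_neg_le (hk : IsDecayingKernel k s μ) (hs : 0 ≤ s)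
    (ha : 0 < a) :
    ∃ M, ∀ z, Integrable (fun x ↦ |k x| * exp (-a * ‖z - x‖)) μ ∧
      ∫ x, |k x| * exp (-a * ‖z - x‖) ∂μ ≤ M * (1 + ‖z‖) ^ (-s) := by
  obtain ⟨f, hf, hf0, κ, hfκ⟩ := hk.exists_integrable_one_add_norm_rpow_mul_abs_le
  obtain ⟨B, hB⟩ := exists_one_add_rpow_mul_exp_neg_le s ha
  set w : E → ℝ := fun x ↦ (1 + ‖x‖) ^ s * exp (-a * ‖x‖)
  have hw : Integrable w μ := integrable_one_add_norm_rpow_mul_exp_neg μ s ha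
  set M := (∫ x, f x ∂μ) * B + κ * ∫ x, w x ∂μ
  have hG (z : E) : Integrable (fun x ↦ (f x * B + κ * w (z - x)) * (1 + ‖z‖) ^ (-s)) μ :=
    ((hf.mul_const B).add ((hw.comp_sub_left z).const_mul κ)).mul_const _
  have hle (z x : E) :
      |k x| * exp (-a * ‖z - x‖) ≤ (f x * B + κ * w (z - x)) * (1 + ‖z‖) ^ (-s) := by
    rw [rpow_neg (by positivity), ← div_eq_mul_inv, le_div_iff₀ (by positivity)]
    calc |k x| * exp (-a * ‖z - x‖) * (1 + ‖z‖) ^ s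
        ≤ |k x| * exp (-a * ‖z - x‖) * ((1 + ‖x‖) ^ s * (1 + ‖z - x‖) ^ s) := by
          gcongr
          exact one_add_norm_rpow_le_mul hs z x
      _ = (1 + ‖x‖) ^ s * |k x| * w (z - x) := by ring
      _ ≤ (f x + κ) * w (z - x) := by
          gcongr
          exact hfκ x
      _ ≤ f x * B + κ * w (z - x) := by
          rw [add_mul]
          gcongr
          · exact hf0 x
          · exact hB _ (norm_nonneg _)
  have hint (z : E) : Integrable (fun x ↦ |k x| * exp (-a * ‖z - x‖)) μ := by
    refine (hG z).mono' (hk.aestronglyMeasurable.norm.mul (by fun_prop)) (.of_forall fun x ↦ ?_)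
    rw [norm_of_nonneg (by positivity)]
    exact hle z x
  have hbound (z : E) : ∫ x, |k x| * exp (-a * ‖z - x‖) ∂μ ≤ M * (1 + ‖z‖) ^ (-s) := by
    refine (integral_mono (hint z) (hG z) (hle z)).trans_eq ?_
    rw [integral_mul_const, integral_add (hf.mul_const B) ((hw.comp_sub_left z).const_mul κ),
      integral_mul_const, integral_const_mul, integral_sub_left_eq_self w]
  exact ⟨M, fun z ↦ ⟨hint z, hbound z⟩⟩

lemma integrable_abs_mul_exp_neg (hk : IsDecayingKernel k s μ) (hs : 0 ≤ s) (ha : 0 < a)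
    (z : E) : Integrable (fun x ↦ |k x| * exp (-a * ‖z - x‖)) μ := by
  obtain ⟨M, hM⟩ := hk.exists_integral_abs_mul_exp_neg_le hs ha
  exact (hM z).1

variable {F : Type*} [NormedAddCommGroup F] [NormedSpace ℝ F]

lemma integrable_smul (hk : IsDecayingKernel k s μ) (hs : 0 ≤ s) (ha : 0 < a)
    {g : E → F} {C : ℝ} (hg : HasExpDecay g C a) (hgm : AEStronglyMeasurable g μ) (z : E) :
    Integrable (fun x ↦ k x • g (z - x)) μ := by
  refine ((hk.integrable_abs_mul_exp_neg hs ha z).const_mul C).mono'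
    (hk.aestronglyMeasurable.convolution_integrand_snd (.lsmul ℝ ℝ) hgm z)
    (.of_forall fun x ↦ hg.norm_smul_le (k x) _)

lemma norm_convolution_le (hk : IsDecayingKernel k s μ) (hs : 0 ≤ s) (ha : 0 < a)
    {g : E → F} {C : ℝ} (hg : HasExpDecay g C a) (z : E) :
    ‖(k ⋆[.lsmul ℝ ℝ, μ] g) z‖ ≤ C * ∫ x, |k x| * exp (-a * ‖z - x‖) ∂μ := by
  rw [← integral_const_mul]
  exact norm_integral_le_of_norm_le ((hk.integrable_abs_mul_exp_neg hs ha z).const_mul C)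
    (.of_forall fun x ↦ hg.norm_smul_le (k x) _)

lemma continuous_convolution (hk : IsDecayingKernel k s μ) (hs : 0 ≤ s) (ha : 0 < a)
    {Y : Type*} [TopologicalSpace Y] [FirstCountableTopology Y] {g : Y → E → F} {C : ℝ}
    (hg : ∀ y, HasExpDecay (g y) C a) (hgc : Continuous (Function.uncurry g)) :
    Continuous fun p : Y × E ↦ (k ⋆[.lsmul ℝ ℝ, μ] g p.1) p.2 := by
  refine continuous_iff_continuousAt.2 fun ⟨y, z⟩ ↦ continuousAt_of_dominated
    (bound := fun x ↦ C * exp (a * 1) * (|k x| * exp (-a * ‖z - x‖)))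
    (.of_forall fun p ↦ hk.aestronglyMeasurable.convolution_integrand_snd (.lsmul ℝ ℝ)
      (hgc.uncurry_left p.1).aestronglyMeasurable p.2) ?_
    ((hk.integrable_abs_mul_exp_neg hs ha z).const_mul _) (.of_forall fun x ↦ ?_)
  · have hball : ∀ᶠ p : Y × E in 𝓝 (y, z), p.2 ∈ Metric.ball z 1 :=
      continuous_snd.continuousAt.eventually_mem (Metric.ball_mem_nhds z one_pos)
    filter_upwards [hball] with p hp
    exact .of_forall fun x ↦ (hg p.1).norm_smul_le_of_dist_le ha.le (k x) hp.le
  · exact (continuous_const.smul (hgc.comp (by fun_prop :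
      Continuous fun p : Y × E ↦ (p.1, p.2 - x)))).continuousAt

lemma hasFDerivAt_convolution [CompleteSpace F] [SecondCountableTopology F]
    (hk : IsDecayingKernel k s μ) (hs : 0 ≤ s) (ha : 0 < a) {g : E → F} {C C' : ℝ}
    (hgd : Differentiable ℝ g) (hg : HasExpDecay g C a) (hg' : HasExpDecay (fderiv ℝ g) C' a)
    (z : E) :
    HasFDerivAt (k ⋆[.lsmul ℝ ℝ, μ] g) ((k ⋆[.lsmul ℝ ℝ, μ] fderiv ℝ g) z) z := by
  refine hasFDerivAt_integral_of_dominated_of_fderiv_le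
    (bound := fun x ↦ C' * exp (a * 1) * (|k x| * exp (-a * ‖z - x‖)))
    (F' := fun w x ↦ k x • fderiv ℝ g (w - x))
    (Metric.ball_mem_nhds z one_pos)
    (.of_forall fun w ↦ hk.aestronglyMeasurable.convolution_integrand_snd (.lsmul ℝ ℝ)
      hgd.continuous.aestronglyMeasurable w)
    (hk.integrable_smul hs ha hg hgd.continuous.aestronglyMeasurable z)
    (hk.aestronglyMeasurable.convolution_integrand_snd (.lsmul ℝ ℝ)
      (measurable_fderiv ℝ g).aestronglyMeasurable z)
    (.of_forall fun x w hw ↦ hg'.norm_smul_le_of_dist_le ha.le (k x) hw.le)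
    ((hk.integrable_abs_mul_exp_neg hs ha z).const_mul _)
    (.of_forall fun x w _ ↦ ?_)
  exact ((hgd (w - x)).hasFDerivAt.comp w ((hasFDerivAt_id w).sub_const x)).const_smul (k x)

end IsDecayingKernel

section SquareIntegrability

lemma stronglyMeasurable_sqrt_integral_norm_sq {Y Z F : Type*} [MeasurableSpace Y]
    [MeasurableSpace Z] {μ : Measure Z} [SFinite μ] [SeminormedAddCommGroup F] {f : Y → Z → F}
    (hf : StronglyMeasurable (Function.uncurry f)) :
    StronglyMeasurable fun y ↦ √(∫ z, ‖f y z‖ ^ 2 ∂μ) :=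
  continuous_sqrt.comp_stronglyMeasurable (hf.norm.pow 2).integral_prod_right

lemma norm_sq_le_of_norm_le {E F : Type*} [SeminormedAddCommGroup E] [SeminormedAddCommGroup F]
    {B s : ℝ} {f : E → F} (hf : ∀ z, ‖f z‖ ≤ B * (1 + ‖z‖) ^ (-s)) (z : E) :
    ‖f z‖ ^ 2 ≤ B ^ 2 * (1 + ‖z‖) ^ (-(2 * s)) := by
  calc ‖f z‖ ^ 2 ≤ (B * (1 + ‖z‖) ^ (-s)) ^ 2 := by
        gcongr
        exact hf z
    _ = B ^ 2 * (1 + ‖z‖) ^ (-(2 * s)) := by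
        rw [mul_pow, ← rpow_mul_natCast (by positivity)]
        ring_nf

variable {E F : Type*} [NormedAddCommGroup E] [NormedSpace ℝ E] [FiniteDimensional ℝ E]
  [MeasurableSpace E] [BorelSpace E] {μ : Measure E} [μ.IsAddHaarMeasure]
  [NormedAddCommGroup F] {s b B : ℝ}

lemma memLp_two_of_norm_le (hs : (finrank ℝ E : ℝ) < 2 * s) {f : E → F}
    (hfm : AEStronglyMeasurable f μ) (hf : ∀ z, ‖f z‖ ≤ B * (1 + ‖z‖) ^ (-s)) :
    MemLp f 2 μ := by
  refine (memLp_two_iff_integrable_sq_norm hfm).2 <|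
    ((integrable_one_add_norm hs).const_mul (B ^ 2)).mono' (hfm.norm.pow 2)
      (.of_forall fun z ↦ ?_)
  rw [norm_pow, norm_norm]
  exact norm_sq_le_of_norm_le hf z

lemma sqrt_integral_norm_sq_le (hs : (finrank ℝ E : ℝ) < 2 * s) {f : E → F}
    (hf : ∀ z, ‖f z‖ ≤ B * (1 + ‖z‖) ^ (-s)) :
    √(∫ z, ‖f z‖ ^ 2 ∂μ) ≤ B * √(∫ z, (1 + ‖z‖) ^ (-(2 * s)) ∂μ) := by
  have hB : 0 ≤ B := by simpa using (norm_nonneg _).trans (hf 0)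
  calc √(∫ z, ‖f z‖ ^ 2 ∂μ)
      ≤ √(∫ z, B ^ 2 * (1 + ‖z‖) ^ (-(2 * s)) ∂μ) :=
        sqrt_le_sqrt <| integral_mono_of_nonneg (.of_forall fun z ↦ by positivity)
          ((integrable_one_add_norm hs).const_mul _) (.of_forall (norm_sq_le_of_norm_le hf))
    _ = B * √(∫ z, (1 + ‖z‖) ^ (-(2 * s)) ∂μ) := by
        rw [integral_const_mul, sqrt_mul (sq_nonneg B), sqrt_sq hB]

lemma hasExpDecay_sqrt_integral_norm_sq (hs : (finrank ℝ E : ℝ) < 2 * s) {f : E → E → F}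
    (hf : ∀ y z, ‖f y z‖ ≤ B * exp (-b * ‖y‖) * (1 + ‖z‖) ^ (-s)) :
    HasExpDecay (fun y ↦ √(∫ z, ‖f y z‖ ^ 2 ∂μ))
      (B * √(∫ z, (1 + ‖z‖) ^ (-(2 * s)) ∂μ)) b := fun y ↦ by
  rw [norm_of_nonneg (sqrt_nonneg _), mul_right_comm]
  exact sqrt_integral_norm_sq_le hs (hf y)

end SquareIntegrability

/-- The density `x ↦ ψ(x) ψ(x + y)` whose integral is the overlap of `ψ` with its translate by
`-y`, and whose potential is the interaction term of `l_y`. -/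
def twoPointDensity {E : Type*} [Add E] (ψ : E → ℝ) (y x : E) : ℝ := ψ x * ψ (x + y)

section TwoPointDensity

section

variable {E : Type*} [NormedAddCommGroup E] {ψ : E → ℝ}

lemma hasExpDecay_twoPointDensity {C a : ℝ} (hψ : HasExpDecay ψ C a) (ha : 0 ≤ a) (y : E) :
    HasExpDecay (twoPointDensity ψ y) (C * C * exp (-(a / 2) * ‖y‖)) (a / 2) := fun x ↦
  (norm_mul_le _ _).trans (hψ.norm_mul_norm_add_le hψ ha x y)

lemma continuous_twoPointDensity (hψ : Continuous ψ) :
    Continuous (Function.uncurry (twoPointDensity ψ)) := by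
  unfold Function.uncurry twoPointDensity
  fun_prop

end

variable {E : Type*} [NormedAddCommGroup E] [NormedSpace ℝ E] {ψ : E → ℝ}

lemma differentiable_twoPointDensity (hψ : Differentiable ℝ ψ) (y : E) :
    Differentiable ℝ (twoPointDensity ψ y) := by
  unfold twoPointDensity
  fun_prop

lemma fderiv_twoPointDensity (hψ : Differentiable ℝ ψ) (y x : E) :
    fderiv ℝ (twoPointDensity ψ y) x =
      ψ x • fderiv ℝ ψ (x + y) + ψ (x + y) • fderiv ℝ ψ x := by
  have hshift : DifferentiableAt ℝ (fun x ↦ ψ (x + y)) x := by fun_prop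
  rw [← fderiv_comp_add_right]
  exact fderiv_fun_mul (hψ x) hshift

lemma hasExpDecay_fderiv_twoPointDensity {C C' a : ℝ} (hψd : Differentiable ℝ ψ)
    (hψ : HasExpDecay ψ C a) (hψ' : HasExpDecay (fderiv ℝ ψ) C' a) (ha : 0 ≤ a) (y : E) :
    HasExpDecay (fderiv ℝ (twoPointDensity ψ y))
      (2 * (C * C') * exp (-(a / 2) * ‖y‖)) (a / 2) := fun x ↦ by
  rw [fderiv_twoPointDensity hψd]
  calc ‖ψ x • fderiv ℝ ψ (x + y) + ψ (x + y) • fderiv ℝ ψ x‖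
      ≤ ‖ψ x‖ * ‖fderiv ℝ ψ (x + y)‖ + ‖fderiv ℝ ψ x‖ * ‖ψ (x + y)‖ := by
        rw [mul_comm ‖fderiv ℝ ψ x‖, ← norm_smul, ← norm_smul]
        exact norm_add_le _ _
    _ ≤ C * C' * exp (-(a / 2) * ‖y‖) * exp (-(a / 2) * ‖x‖) +
          C' * C * exp (-(a / 2) * ‖y‖) * exp (-(a / 2) * ‖x‖) :=
        add_le_add (hψ.norm_mul_norm_add_le hψ' ha x y) (hψ'.norm_mul_norm_add_le hψ ha x y)
    _ = 2 * (C * C') * exp (-(a / 2) * ‖y‖) * exp (-(a / 2) * ‖x‖) := by ring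

end TwoPointDensity

/-- The overlap `H(y) = ∫ ψ(x) ψ(x + y) dx` of `ψ` with its translate. -/
def overlap {E : Type*} [Add E] [MeasurableSpace E] (μ : Measure E) (ψ : E → ℝ) (y : E) : ℝ :=
  ∫ x, twoPointDensity ψ y x ∂μ

section Overlap

variable {E : Type*} [NormedAddCommGroup E] [NormedSpace ℝ E] [FiniteDimensional ℝ E]
  [MeasurableSpace E] [BorelSpace E] {μ : Measure E} [μ.IsAddHaarMeasure] {ψ : E → ℝ} {C a : ℝ}

lemma hasExpDecay_overlap (hψ : HasExpDecay ψ C a) (ha : 0 < a) :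
    HasExpDecay (overlap μ ψ) (C * C * ∫ x, exp (-(a / 2) * ‖x‖) ∂μ) (a / 2) := fun y ↦ by
  rw [mul_right_comm]
  exact (hasExpDecay_twoPointDensity hψ ha.le y).norm_integral_le (half_pos ha)

lemma continuous_overlap (hψc : Continuous ψ) (hψ : HasExpDecay ψ C a) (ha : 0 < a) :
    Continuous (overlap μ ψ) := by
  have hc := continuous_twoPointDensity hψc
  refine continuous_of_dominated (fun y ↦ (hc.uncurry_left y).aestronglyMeasurable)
    (fun y ↦ .of_forall fun x ↦ ?_)
    ((integrable_exp_neg_norm μ (half_pos ha)).const_mul (C * C))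
    (.of_forall fun x ↦ hc.uncurry_right x)
  refine (hasExpDecay_twoPointDensity hψ ha.le y).mono ?_ x
  exact mul_le_of_le_one_right (mul_self_nonneg C) (exp_neg_norm_le_one (half_pos ha).le y)

end Overlap

/-- The potential of the density `g y` for the kernel `k`, subtracted from `h y` times that of
`g 0`. The function `l_y` is the case `h = overlap μ ψ`, `g = twoPointDensity ψ`. Densities may
be vector-valued, which makes the gradient of such a difference another one. -/
def subtractedPotential {E F : Type*} [NormedAddCommGroup E] [MeasurableSpace E]
    [NormedAddCommGroup F] [NormedSpace ℝ F] (μ : Measure E) (k h : E → ℝ) (g : E → E → F)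
    (y z : E) : F :=
  h y • (k ⋆[.lsmul ℝ ℝ, μ] g 0) z - (k ⋆[.lsmul ℝ ℝ, μ] g y) z

section SubtractedPotential

variable {E F : Type*} [NormedAddCommGroup E] [NormedSpace ℝ E] [FiniteDimensional ℝ E]
  [MeasurableSpace E] [BorelSpace E] {μ : Measure E} [μ.IsAddHaarMeasure]
  [NormedAddCommGroup F] [NormedSpace ℝ F] {k h : E → ℝ} {g : E → E → F} {s b A D : ℝ}

lemma exists_norm_subtractedPotential_le (hk : IsDecayingKernel k s μ) (hs : 0 ≤ s)
    (hb : 0 < b) (hh : HasExpDecay h A b)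
    (hg : ∀ y, HasExpDecay (g y) (D * exp (-b * ‖y‖)) b) :
    ∃ B, ∀ y z, ‖subtractedPotential μ k h g y z‖ ≤
      B * exp (-b * ‖y‖) * (1 + ‖z‖) ^ (-s) := by
  obtain ⟨M, hM⟩ := hk.exists_integral_abs_mul_exp_neg_le hs hb
  have hA := hh.nonneg
  have hpot (y z : E) : ‖(k ⋆[.lsmul ℝ ℝ, μ] g y) z‖ ≤
      D * exp (-b * ‖y‖) * (M * (1 + ‖z‖) ^ (-s)) :=
    (hk.norm_convolution_le hs hb (hg y) z).trans
      (mul_le_mul_of_nonneg_left (hM z).2 (hg y).nonneg)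
  refine ⟨A * (D * M) + D * M, fun y z ↦ ?_⟩
  calc ‖subtractedPotential μ k h g y z‖
      ≤ ‖h y‖ * ‖(k ⋆[.lsmul ℝ ℝ, μ] g 0) z‖ + ‖(k ⋆[.lsmul ℝ ℝ, μ] g y) z‖ := by
        rw [← norm_smul]
        exact norm_sub_le _ _
    _ ≤ A * exp (-b * ‖y‖) * (D * exp (-b * ‖(0 : E)‖) * (M * (1 + ‖z‖) ^ (-s))) +
          D * exp (-b * ‖y‖) * (M * (1 + ‖z‖) ^ (-s)) := by
        gcongr
        exacts [hh y, hpot 0 z, hpot y z]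
    _ = (A * (D * M) + D * M) * exp (-b * ‖y‖) * (1 + ‖z‖) ^ (-s) := by
        rw [norm_zero, mul_zero, exp_zero]
        ring

lemma continuous_subtractedPotential (hk : IsDecayingKernel k s μ) (hs : 0 ≤ s) (hb : 0 < b)
    (hhc : Continuous h) (hg : ∀ y, HasExpDecay (g y) D b)
    (hgc : Continuous (Function.uncurry g)) :
    Continuous (Function.uncurry (subtractedPotential μ k h g)) := by
  have hpot := hk.continuous_convolution hs hb hg hgc
  have hpot₀ : Continuous fun p : E × E ↦ (k ⋆[.lsmul ℝ ℝ, μ] g 0) p.2 :=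
    hpot.comp (continuous_const.prodMk continuous_snd)
  exact ((hhc.comp continuous_fst).smul hpot₀).sub hpot

lemma hasFDerivAt_subtractedPotential [CompleteSpace F] [SecondCountableTopology F]
    (hk : IsDecayingKernel k s μ) (hs : 0 ≤ s) (hb : 0 < b) {D' : E → ℝ}
    (hgd : ∀ y, Differentiable ℝ (g y)) (hg : ∀ y, HasExpDecay (g y) D b)
    (hg' : ∀ y, HasExpDecay (fderiv ℝ (g y)) (D' y) b) (y z : E) :
    HasFDerivAt (subtractedPotential μ k h g y)
      (subtractedPotential μ k h (fun y ↦ fderiv ℝ (g y)) y z) z :=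
  ((hk.hasFDerivAt_convolution hs hb (hgd 0) (hg 0) (hg' 0) z).const_smul (h y)).sub
    (hk.hasFDerivAt_convolution hs hb (hgd y) (hg y) (hg' y) z)

end SubtractedPotential

theorem statement11_general {E : Type*} [NormedAddCommGroup E] [NormedSpace ℝ E]
    [FiniteDimensional ℝ E] [MeasurableSpace E] [BorelSpace E] {μ : Measure E}
    [μ.IsAddHaarMeasure] {k ψ : E → ℝ} {s a C C' : ℝ} (hk : IsDecayingKernel k s μ)
    (hs : (finrank ℝ E : ℝ) < 2 * s) (ha : 0 < a) (hψd : Differentiable ℝ ψ)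
    (hψ : HasExpDecay ψ C a) (hψ' : HasExpDecay (fderiv ℝ ψ) C' a) :
    let l := subtractedPotential μ k (overlap μ ψ) (twoPointDensity ψ)
    (∀ y, Differentiable ℝ (l y) ∧ MemLp (l y) 2 μ ∧ MemLp (fderiv ℝ (l y)) 2 μ) ∧
    (∃ M, HasExpDecay (fun y ↦ √(∫ z, ‖l y z‖ ^ 2 ∂μ)) M (a / 2) ∧
      HasExpDecay (fun y ↦ √(∫ z, ‖fderiv ℝ (l y) z‖ ^ 2 ∂μ)) M (a / 2)) ∧
    ∀ n : ℕ, Integrable (fun y ↦ ‖y‖ ^ n * √(∫ z, ‖l y z‖ ^ 2 ∂μ)) μ ∧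
      Integrable (fun y ↦ ‖y‖ ^ n * √(∫ z, ‖fderiv ℝ (l y) z‖ ^ 2 ∂μ)) μ := by
  intro l
  have hb := half_pos ha
  have hs₀ : 0 ≤ s := by linarith [(finrank ℝ E).cast_nonneg (α := ℝ)]
  have hH := hasExpDecay_overlap (μ := μ) hψ ha
  have hρ (y : E) : HasExpDecay (twoPointDensity ψ y) (C * C) (a / 2) :=
    (hasExpDecay_twoPointDensity hψ ha.le y).mono <|
      mul_le_of_le_one_right (mul_self_nonneg C) (exp_neg_norm_le_one hb.le y)
  have hderiv := hasFDerivAt_subtractedPotential (h := overlap μ ψ) hk hs₀ hb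
    (differentiable_twoPointDensity hψd) hρ (hasExpDecay_fderiv_twoPointDensity hψd hψ hψ' ha.le)
  have hfderiv (y z : E) : fderiv ℝ (l y) z = subtractedPotential μ k (overlap μ ψ)
      (fun y ↦ fderiv ℝ (twoPointDensity ψ y)) y z := (hderiv y z).fderiv
  have hcont : Continuous (Function.uncurry l) := continuous_subtractedPotential hk hs₀ hb
    (continuous_overlap hψd.continuous hψ ha) hρ (continuous_twoPointDensity hψd.continuous)
  have hmeas := stronglyMeasurable_sqrt_integral_norm_sq (μ := μ) hcont.stronglyMeasurable
  have hmeas' := stronglyMeasurable_sqrt_integral_norm_sq (μ := μ)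
    (f := fun y z ↦ fderiv ℝ (l y) z)
    (measurable_fderiv_with_param ℝ hcont).stronglyMeasurable
  obtain ⟨B, hB⟩ := exists_norm_subtractedPotential_le hk hs₀ hb hH
    (hasExpDecay_twoPointDensity hψ ha.le)
  obtain ⟨B', hB'⟩ := exists_norm_subtractedPotential_le hk hs₀ hb hH
    (hasExpDecay_fderiv_twoPointDensity hψd hψ hψ' ha.le)
  simp only [← hfderiv] at hB'
  have hdecay := hasExpDecay_sqrt_integral_norm_sq (μ := μ) hs hB
  have hdecay' := hasExpDecay_sqrt_integral_norm_sq (μ := μ) hs hB'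
  refine ⟨fun y ↦ ⟨fun z ↦ (hderiv y z).differentiableAt, ?_, ?_⟩,
    ⟨_, hdecay.mono (le_max_left _ _), hdecay'.mono (le_max_right _ _)⟩, fun n ↦ ⟨?_, ?_⟩⟩
  · exact memLp_two_of_norm_le hs (hcont.uncurry_left y).aestronglyMeasurable (hB y)
  · exact memLp_two_of_norm_le hs (measurable_fderiv ℝ (l y)).aestronglyMeasurable (hB' y)
  · exact hdecay.integrable_norm_pow_smul hb hmeas.aestronglyMeasurable n
  · exact hdecay'.integrable_norm_pow_smul hb hmeas'.aestronglyMeasurable n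

/-- The kernel `1 / (2π²|x|²)`: up to its sign, the form factor `h₀` of the polaron. -/
def polaronKernel {E : Type*} [Norm E] (x : E) : ℝ := (2 * π ^ 2 * ‖x‖ ^ 2)⁻¹

lemma polaronKernel_isBigO {E : Type*} [NormedAddCommGroup E] [ProperSpace E] :
    (polaronKernel : E → ℝ) =O[cocompact E] fun x ↦ (1 + ‖x‖) ^ (-2 : ℝ) := by
  refine .of_bound (2 / π ^ 2) ?_
  filter_upwards [tendsto_norm_cocompact_atTop.eventually_ge_atTop 1] with x hx
  have hle : (1 + ‖x‖) ^ 2 ≤ (2 * ‖x‖) ^ 2 := by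
    gcongr
    linarith
  rw [polaronKernel, rpow_neg (by positivity), norm_of_nonneg (by positivity),
    norm_of_nonneg (by positivity), rpow_two, ← div_eq_mul_inv, div_div, inv_eq_one_div,
    div_le_div_iff₀ (by positivity) (by positivity)]
  linarith [mul_le_mul_of_nonneg_left hle (sq_nonneg π)]

lemma isDecayingKernel_polaronKernel {E : Type*} [NormedAddCommGroup E] [NormedSpace ℝ E]
    [FiniteDimensional ℝ E] [MeasurableSpace E] [BorelSpace E] (μ : Measure E)
    [μ.IsAddHaarMeasure] (hE : 2 < finrank ℝ E) :
    IsDecayingKernel (polaronKernel : E → ℝ) 2 μ where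
  locallyIntegrable := by
    refine locallyIntegrable_of_norm_le_rpow (C := (2 * π ^ 2)⁻¹) (α := 2) (by lia)
      (by exact_mod_cast hE) (.of_forall fun x ↦ ?_) ?_
    · rw [polaronKernel, mul_inv, norm_of_nonneg (by positivity), rpow_neg (norm_nonneg x),
        rpow_two]
    · unfold polaronKernel
      fun_prop
  isBigO := polaronKernel_isBigO

lemma subtractedPotential_polaronKernel_eq {E : Type*} [NormedAddCommGroup E] [NormedSpace ℝ E]
    [FiniteDimensional ℝ E] [MeasurableSpace E] [BorelSpace E] {μ : Measure E}
    [μ.IsAddHaarMeasure] (ψ : E → ℝ) (y z : E) :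
    subtractedPotential μ polaronKernel (overlap μ ψ) (twoPointDensity ψ) y z =
      (∫ x, ψ x * ψ (x + y) ∂μ) * (∫ x, ψ x ^ 2 / (2 * π ^ 2 * ‖z - x‖ ^ 2) ∂μ) -
        ∫ x, ψ x * ψ (x + y) / (2 * π ^ 2 * ‖x - z‖ ^ 2) ∂μ := by
  simp only [subtractedPotential, convolution_lsmul_swap, polaronKernel, twoPointDensity, overlap,
    add_zero, smul_eq_mul, inv_mul_eq_div, sq (ψ _), norm_sub_rev _ z]

lemma hasExpDecay_of_norm_iteratedFDeriv_le {E F : Type*} [NormedAddCommGroup E]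
    [NormedSpace ℝ E] [NormedAddCommGroup F] [NormedSpace ℝ F] {f : E → F} {C c : ℝ}
    (hf : ∀ k ≤ 1, ∀ x, ‖iteratedFDeriv ℝ k f x‖ ≤ C * exp (-‖x‖ / c)) :
    HasExpDecay f C c⁻¹ ∧ HasExpDecay (fderiv ℝ f) C c⁻¹ := by
  have hexp (x : E) : -‖x‖ / c = -c⁻¹ * ‖x‖ := by ring
  constructor <;> intro x
  · simpa only [hexp, norm_iteratedFDeriv_zero] using hf 0 zero_le_one x
  · simpa only [hexp, norm_iteratedFDeriv_one] using hf 1 le_rfl x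

end Potentials

/-- For a smooth, radial, positive, normalized `ψ` on `ℝ³` whose
derivatives up to second order decay exponentially, with Pekar field
`φ(z) = ∫ ψ(x)²/(2π²|z−x|²) dx`, overlap `H(y) = ∫ ψ(x)ψ(x+y) dx` and
`l_y(z) = H(y)φ(z) − ∫ ψ(x)ψ(x+y)/(2π²|x−z|²) dx`, for `k = 0,1` one has
`sup_y ‖∇^k l_y‖_{L²} < ∞` and `∫ |y|^n ‖∇^k l_y‖_{L²} dy < ∞` for every `n ∈ ℕ`. -/
theorem statement11
    (ψ : EuclideanSpace ℝ (Fin 3) → ℝ) (C₀ : ℝ) (hC₀ : 0 < C₀)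
    (hsmooth : ContDiff ℝ (⊤ : ℕ∞) ψ)
    (hpos : ∀ x, 0 < ψ x)
    (hradial : ∃ f : ℝ → ℝ, ∀ x, ψ x = f ‖x‖)
    (hnorm : ∫ x, ψ x ^ 2 = 1)
    (hdecay : ∀ k : ℕ, k ≤ 2 → ∀ x,
      ‖iteratedFDeriv ℝ k ψ x‖ ≤ C₀ * Real.exp (-‖x‖ / C₀))
    (φ : EuclideanSpace ℝ (Fin 3) → ℝ)
    (hφ : ∀ z, φ z = ∫ x, ψ x ^ 2 / (2 * π ^ 2 * ‖z - x‖ ^ 2))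
    (H : EuclideanSpace ℝ (Fin 3) → ℝ)
    (hH : ∀ y, H y = ∫ x, ψ x * ψ (x + y))
    (l : EuclideanSpace ℝ (Fin 3) → EuclideanSpace ℝ (Fin 3) → ℝ)
    (hl : ∀ y z, l y z =
      H y * φ z - ∫ x, ψ x * ψ (x + y) / (2 * π ^ 2 * ‖x - z‖ ^ 2)) :
    (∃ Mconst : ℝ, ∀ y,
      Real.sqrt (∫ z, l y z ^ 2) ≤ Mconst ∧
      Real.sqrt (∫ z, ‖fderiv ℝ (l y) z‖ ^ 2) ≤ Mconst) ∧
    (∀ n : ℕ,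
      Integrable (fun y => ‖y‖ ^ n * Real.sqrt (∫ z, l y z ^ 2)) ∧
      Integrable (fun y => ‖y‖ ^ n * Real.sqrt (∫ z, ‖fderiv ℝ (l y) z‖ ^ 2))) := by
  obtain ⟨hψ, hψ'⟩ := hasExpDecay_of_norm_iteratedFDeriv_le fun k hk ↦
    hdecay k (hk.trans one_le_two)
  have hl_eq : l = subtractedPotential volume polaronKernel (overlap volume ψ)
      (twoPointDensity ψ) := by
    ext y z
    rw [hl, hφ, hH, subtractedPotential_polaronKernel_eq]
  have hkernel := isDecayingKernel_polaronKernel (E := EuclideanSpace ℝ (Fin 3)) volume (by simp)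
  obtain ⟨-, ⟨M, hM, hM'⟩, hint⟩ := statement11_general hkernel (by norm_num)
    (inv_pos.2 hC₀) (hsmooth.differentiable (by simp)) hψ hψ'
  simp only [← hl_eq, norm_eq_abs, sq_abs] at hM hM' hint
  have hrate := (half_pos (inv_pos.2 hC₀)).le
  exact ⟨⟨M, fun y ↦ ⟨(le_abs_self _).trans (hM.norm_le hrate y),
    (le_abs_self _).trans (hM'.norm_le hrate y)⟩⟩, hint⟩
end
end

section
/- Let E be a complex inner product space, let n ∈ ℕ, and let v₀, v₁, …, v_n ∈ E. Suppose there are real numbers t and ε ≥ 0 such that |⟨vᵢ, vⱼ⟩ − t δᵢⱼ| ≤ ε for all 0 ≤ i, j ≤ n, and that t > (n+1) ε. Then the vectors v₀, …, v_n are linearly independent; in particular their span has dimension n+1. -/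
open scoped InnerProductSpace

/-!
The Gram matrix of `v` differs from the scalar matrix `t` by entries of size at most `ε`, so every
row of the difference has `ℓ¹` norm smaller than `‖t‖`. The Gram matrix is therefore strictly
diagonally dominant, hence invertible, which is linear independence of `v`.
-/

theorem det_ne_zero_of_sum_norm_sub_diagonal_lt {K ι : Type*} [NormedField K] [Fintype ι]
    [DecidableEq ι] {A : Matrix ι ι K} {d : ι → K}
    (h : ∀ i, ∑ j, ‖(A - Matrix.diagonal d) i j‖ < ‖d i‖) : A.det ≠ 0 := by
  refine det_ne_zero_of_sum_row_lt_diag fun i ↦ ?_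
  have off_diagonal : ∑ j ∈ Finset.univ.erase i, ‖(A - Matrix.diagonal d) i j‖ =
      ∑ j ∈ Finset.univ.erase i, ‖A i j‖ :=
    Finset.sum_congr rfl fun j hj ↦ by
      rw [Matrix.sub_apply, Matrix.diagonal_apply_ne _ (Finset.ne_of_mem_erase hj).symm, sub_zero]
  have row_sum : ‖A i i - d i‖ + ∑ j ∈ Finset.univ.erase i, ‖A i j‖ < ‖d i‖ := by
    have hi := h i
    rwa [← Finset.add_sum_erase _ _ (Finset.mem_univ i), off_diagonal, Matrix.sub_apply,
      Matrix.diagonal_apply_eq] at hi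
  linarith [norm_le_norm_add_norm_sub (A i i) (d i)]

section Gram

variable {𝕜 E ι : Type*} [RCLike 𝕜] [SeminormedAddCommGroup E] [InnerProductSpace 𝕜 E] [Fintype ι]
  [DecidableEq ι] {v : ι → E}

theorem linearIndependent_of_sum_norm_gram_sub_diagonal_lt {d : ι → 𝕜}
    (h : ∀ i, ∑ j, ‖(Matrix.gram 𝕜 v - Matrix.diagonal d) i j‖ < ‖d i‖) :
    LinearIndependent 𝕜 v :=
  Matrix.linearIndependent_of_det_gram_ne_zero (det_ne_zero_of_sum_norm_sub_diagonal_lt h)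

theorem statement15_general {t : 𝕜} {ε : ℝ}
    (h : ∀ i j, ‖⟪v i, v j⟫_𝕜 - (if i = j then t else 0)‖ ≤ ε) (ht : Fintype.card ι * ε < ‖t‖) :
    LinearIndependent 𝕜 v ∧
      Module.finrank 𝕜 (Submodule.span 𝕜 (Set.range v)) = Fintype.card ι := by
  have hv : LinearIndependent 𝕜 v := by
    refine linearIndependent_of_sum_norm_gram_sub_diagonal_lt (d := fun _ ↦ t) fun i ↦ ?_
    calc ∑ j, ‖(Matrix.gram 𝕜 v - Matrix.diagonal fun _ ↦ t : Matrix ι ι 𝕜) i j‖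
        ≤ ∑ _j : ι, ε := Finset.sum_le_sum fun j _ ↦ h i j
      _ = Fintype.card ι * ε := by rw [Finset.sum_const, Finset.card_univ, nsmul_eq_mul]
      _ < ‖t‖ := ht
  exact ⟨hv, finrank_span_eq_card hv⟩

end Gram

/-- In a complex inner product space, if `v₀, …, v_n` satisfy
`|⟨vᵢ, vⱼ⟩ − t δᵢⱼ| ≤ ε` for all `i, j` with `t > (n+1)ε ≥ 0`, then they are linearly
independent; in particular their span has dimension `n+1`. -/
theorem statement15
    {E : Type*} [NormedAddCommGroup E] [InnerProductSpace ℂ E]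
    (n : ℕ) (v : Fin (n + 1) → E) (t ε : ℝ) (hε : 0 ≤ ε)
    (h : ∀ i j, ‖(⟪v i, v j⟫_ℂ) - (if i = j then (t : ℂ) else 0)‖ ≤ ε)
    (ht : (n + 1 : ℝ) * ε < t) :
    LinearIndependent ℂ v ∧
      Module.finrank ℂ (Submodule.span ℂ (Set.range v)) = n + 1 := by
  have ht' : (n + 1 : ℝ) * ε < ‖(t : ℂ)‖ := ht.trans_le (Complex.norm_real t ▸ le_abs_self t)
  simpa using statement15_general h (by simpa using ht')
end
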